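/- There exists a constant c > 0 depending only on m and n such that for every integer t ≥ 1, every i ∈ {1, …, m+n−1}, and every decomposable i-vector v ∈ ⋀^i K^{m+n}: ∫_{M_{m,n}(𝒪)} ‖g_t u_s · v‖^{−β_i} dμ_{mn}(s) ≤ c t q^{−mnt} ‖v‖^{−β_i}. -/

import Mathlib

/-!
Write `q` for the cardinality of `F`, and `β` for `β_i`. Suppose `‖V‖ ≠ 0`. Choose rows
`e` of `V` for which the minor is maximal and, among those choices, with as many lower rows (those
with index `> m`) as possible. Dividing on the right by the corresponding square block turns `V` into
a matrix `W` with an identity block in the rows `e`, integral entries, and lower entries of absolute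
value `< 1` in the columns whose pivot is an upper row. For integral `s` the minor of `u_s W` in the
rows `e` is then a unit (`IsNormalized.absv_det`), which gives `‖g_t u_s V‖ ≥ q^{-mnt} ‖V‖`.

For a better bound, replace lower pivot rows by the upper rows that `e` omits. After normalizing the
rows `e` once more, the corresponding minors become minors of a block `S(s)`, and translating `s` by a
matrix `Z` placed in suitable rows and columns translates `S(s)` by `Z` (`exists_schur`). Up to
transposition `S(s)` has size `(α + r) × (r + 1)` with `α = |m - i| + 1`, and replacing `r + 1` rows
produces a coordinate which `g_t` expands by the largest possible factor `q^E`, where `E β = mnt`.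
Hence `‖g_t u_s V‖ ≥ q^E |δ| ‖V‖` for every maximal minor `δ` of `S(s)` (`exists_reduction`).

It remains to see that the maximal minors of a random integral translate `S + Z` are rarely small:
they are all `≤ q^{-k}` with probability at most `2^r q^{-kα}` (`count_main`, by column elimination).
Since `α ≥ β` (`betaE_le`), each of the `E + mnt + 1` layers
`q^{E-k} ‖V‖ ≤ ‖g_t u_s V‖ < q^{E-k+1} ‖V‖` (with no upper bound when `k = 0`)
contributes at most `2^r q^{-mnt} ‖V‖^{-β}` to the average (`average_le`). The number of
layers is linear in `t`, which is the source of the factor `t`. The probabilistic estimate uses only finitely many translates, namely by matrices of Laurent polynomials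
of degree less than the number of layers, and passes to the Haar measure by invariance
(`lintegral_le_of_average`).
-/

open MeasureTheory
open scoped Classical ENNReal

noncomputable section

variable (F : Type*) [Field F] [Fintype F]

/-- The absolute value `|x| = q^{-v(x)}` on the Laurent series field `K = 𝔽_q((X))`,
where `v` is the `X`-adic valuation (the order of vanishing). -/
def absv (x : LaurentSeries F) : ℝ :=
  if x = 0 then 0 else (Fintype.card F : ℝ) ^ (-(HahnSeries.order x))

instance : MeasurableSpace (LaurentSeries F) := borel _

instance (m n : ℕ) : MeasurableSpace (Matrix (Fin m) (Fin n) (LaurentSeries F)) := borel _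

instance (d : ℕ) : MeasurableSpace (Fin d → LaurentSeries F) := borel _

/-- the set of matrices with all entries in the valuation ring `𝒪 = 𝔽_q[[X]] = {x : |x| ≤ 1}`. -/
def intMat (m n : ℕ) : Set (Matrix (Fin m) (Fin n) (LaurentSeries F)) :=
  {s | ∀ k l, absv F (s k l) ≤ 1}

/-- sup norm of a vector in `K^d` -/
def supNorm {d : ℕ} (v : Fin d → LaurentSeries F) : ℝ := ⨆ j, absv F (v j)

/-- the `i × i` minor of a `d × i` matrix with row set `I`. -/
def minor {d i : ℕ} (s : Matrix (Fin d) (Fin i) (LaurentSeries F))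
    (I : {I : Finset (Fin d) // I.card = i}) : LaurentSeries F :=
  (s.submatrix (fun a : Fin i => ((I.1.orderIsoOfFin I.2 a : {x // x ∈ I.1}) : Fin d)) id).det

/-- The norm `‖s₁ ∧ ⋯ ∧ s_i‖` of the wedge product of the columns of a `d × i` matrix:
the maximum of the absolute values of its `i × i` minors. -/
def wedgeNorm {d i : ℕ} (s : Matrix (Fin d) (Fin i) (LaurentSeries F)) : ℝ :=
  ⨆ I : {I : Finset (Fin d) // I.card = i}, absv F (minor F s I)

/-- `X ∈ K`, the uniformizer. -/
def Xu : LaurentSeries F := HahnSeries.single 1 1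

/-- the diagonal element `g_t = diag(X^{-nt} I_m, X^{mt} I_n)`. -/
def gMat (m n : ℕ) (t : ℤ) : Matrix (Fin (m + n)) (Fin (m + n)) (LaurentSeries F) :=
  Matrix.reindex finSumFinEquiv finSumFinEquiv
    (Matrix.fromBlocks ((Xu F ^ (-(n * t))) • (1 : Matrix (Fin m) (Fin m) (LaurentSeries F))) 0 0
      ((Xu F ^ ((m : ℤ) * t)) • (1 : Matrix (Fin n) (Fin n) (LaurentSeries F))))

/-- the upper block-unipotent element `u_s` with blocks `(I_m, s; 0, I_n)`. -/
def uMat {m n : ℕ} (s : Matrix (Fin m) (Fin n) (LaurentSeries F)) :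
    Matrix (Fin (m + n)) (Fin (m + n)) (LaurentSeries F) :=
  Matrix.reindex finSumFinEquiv finSumFinEquiv (Matrix.fromBlocks 1 s 0 1)

/-- the exponent `β_i = m/i` for `i ≤ m` and `n/(m+n-i)` for `i > m`. -/
def betaE (m n i : ℕ) : ℝ := if i ≤ m then (m : ℝ) / i else (n : ℝ) / ((m + n - i : ℕ) : ℝ)

end

/-! ### The absolute value on `𝔽_q((X))` -/

section AbsoluteValue

variable (F : Type*) [Field F] [Fintype F]

lemma one_lt_cardR : (1 : ℝ) < Fintype.card F := by
  exact_mod_cast Fintype.one_lt_card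

lemma absv_le_zpow_iff (x : LaurentSeries F) (k : ℤ) :
    absv F x ≤ (Fintype.card F : ℝ) ^ (-k) ↔ ∀ n < k, x.coeff n = 0 := by
  have hq := one_lt_cardR F
  unfold absv
  split_ifs with h
  · simp only [h, HahnSeries.coeff_zero, implies_true, iff_true]
    positivity
  · rw [zpow_le_zpow_iff_right₀ hq, neg_le_neg_iff]
    constructor
    · intro hk n hn
      exact HahnSeries.coeff_eq_zero_of_lt_order (hn.trans_le hk)
    · intro hk
      by_contra! hlt
      exact h (HahnSeries.coeff_order_eq_zero.1 (hk _ hlt))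

lemma absv_ne_zero {x : LaurentSeries F} (h : x ≠ 0) :
    absv F x = (Fintype.card F : ℝ) ^ (-(HahnSeries.order x)) := if_neg h

lemma absv_nonneg (x : LaurentSeries F) : 0 ≤ absv F x := by
  unfold absv; split_ifs <;> positivity

lemma absv_eq_zero {x : LaurentSeries F} : absv F x = 0 ↔ x = 0 := by
  have hq := one_lt_cardR F
  unfold absv
  split_ifs with h
  · simp [h]
  · simp only [h, iff_false]; positivity

lemma absv_mul (x y : LaurentSeries F) : absv F (x * y) = absv F x * absv F y := by
  have hq := one_lt_cardR F
  by_cases hx : x = 0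
  · simp [hx, absv]
  by_cases hy : y = 0
  · simp [hy, absv]
  rw [absv_ne_zero F hx, absv_ne_zero F hy, absv_ne_zero F (mul_ne_zero hx hy),
    HahnSeries.order_mul hx hy, ← zpow_add₀ (by positivity)]
  congr 1; ring

lemma absv_add_le (x y : LaurentSeries F) : absv F (x + y) ≤ max (absv F x) (absv F y) := by
  wlog h : absv F y ≤ absv F x generalizing x y
  · rw [add_comm, max_comm]; exact this y x (le_of_not_ge h)
  rw [max_eq_left h]
  by_cases hx : x = 0
  · have : y = 0 := by
      rw [← absv_eq_zero F]
      exact le_antisymm (h.trans (by simp [hx, absv])) (absv_nonneg F y)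
    simp [hx, this]
  rw [absv_ne_zero F hx] at h ⊢
  rw [absv_le_zpow_iff] at h ⊢
  intro n hn
  rw [HahnSeries.coeff_add, h n hn, HahnSeries.coeff_eq_zero_of_lt_order hn, add_zero]

/-- `absv` bundled as an absolute value. -/
noncomputable def av : AbsoluteValue (LaurentSeries F) ℝ where
  toFun := absv F
  map_mul' := absv_mul F
  nonneg' := absv_nonneg F
  eq_zero' _ := absv_eq_zero F
  add_le' x y := (absv_add_le F x y).trans
    (max_le_add_of_nonneg (absv_nonneg F x) (absv_nonneg F y))

@[simp] lemma av_apply (x : LaurentSeries F) : av F x = absv F x := rfl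

lemma av_nonarch : IsNonarchimedean (av F) := absv_add_le F

lemma absv_Xu_zpow (k : ℤ) : absv F (Xu F ^ k) = (Fintype.card F : ℝ) ^ (-k) := by
  have h1 : absv F (Xu F) = (Fintype.card F : ℝ)⁻¹ := by
    rw [absv_ne_zero F (by simp [Xu]), Xu, HahnSeries.order_single one_ne_zero, zpow_neg_one]
  have := map_zpow₀ (av F) (Xu F) k
  rw [av_apply, av_apply, h1] at this
  rw [this, inv_zpow, zpow_neg]

/-- The value group is discrete: there is nothing strictly between consecutive powers of `q⁻¹`. -/
lemma absv_discrete (x : LaurentSeries F) (n : ℕ)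
    (h : ((Fintype.card F : ℝ)⁻¹) ^ (n + 1) < absv F x) :
    ((Fintype.card F : ℝ)⁻¹) ^ n ≤ absv F x := by
  have hq := one_lt_cardR F
  have hx : x ≠ 0 := by
    rintro rfl
    rw [(absv_eq_zero F).2 rfl] at h
    exact absurd h (not_lt.2 (by positivity))
  rw [absv_ne_zero F hx, inv_pow, ← zpow_natCast, ← zpow_neg] at h ⊢
  rw [zpow_lt_zpow_iff_right₀ hq] at h
  rw [zpow_le_zpow_iff_right₀ hq]
  push_cast at h
  omega

lemma isOpen_absv_le_one : IsOpen {x : LaurentSeries F | absv F x ≤ 1} := by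
  have h : {x : LaurentSeries F | absv F x ≤ 1}
      = ((Valued.v : Valuation (LaurentSeries F) (WithZero (Multiplicative ℤ))).integer :
        Set (LaurentSeries F)) := by
    ext x
    have h1 := absv_le_zpow_iff F x 0
    have h2 := LaurentSeries.valuation_le_iff_coeff_lt_eq_zero F (D := 0) (f := x)
    simp only [neg_zero, zpow_zero, WithZero.exp_zero] at h1 h2
    simp only [Set.mem_ofPred_eq, SetLike.mem_coe, Valuation.mem_integer_iff]
    exact h1.trans h2.symm
  rw [h]
  exact Valued.isOpen_integer _

lemma measurableSet_intMat (m n : ℕ) : MeasurableSet (intMat F m n) := by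
  have : BorelSpace (Matrix (Fin m) (Fin n) (LaurentSeries F)) := ⟨rfl⟩
  apply IsOpen.measurableSet
  have : intMat F m n = ⋂ k, ⋂ l, (fun s : Matrix (Fin m) (Fin n) (LaurentSeries F) => s k l) ⁻¹'
      {x : LaurentSeries F | absv F x ≤ 1} := by
    ext s; simp [intMat]
  rw [this]
  refine isOpen_iInter_of_finite fun k => isOpen_iInter_of_finite fun l => ?_
  exact (isOpen_absv_le_one F).preimage (continuous_id.matrix_elem k l)

lemma intMat_add {m n : ℕ} {s a : Matrix (Fin m) (Fin n) (LaurentSeries F)}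
    (hs : s ∈ intMat F m n) (ha : a ∈ intMat F m n) : a + s ∈ intMat F m n := fun k l =>
  (absv_add_le F _ _).trans (max_le (ha k l) (hs k l))

/-- The Laurent polynomial `∑_{j<N} c_j X^j`; for varying `c` these represent `𝒪 / X^N 𝒪`. -/
noncomputable def trunc (N : ℕ) (c : Fin N → F) : LaurentSeries F :=
  ∑ j : Fin N, HahnSeries.single ((j : ℕ) : ℤ) (c j)

omit [Fintype F] in
lemma trunc_coeff (N : ℕ) (c : Fin N → F) (j : Fin N) : (trunc F N c).coeff (j : ℤ) = c j := by
  rw [trunc, HahnSeries.coeff_sum, Finset.sum_eq_single j]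
  · simp
  · intro b _ hb
    apply HahnSeries.coeff_single_of_ne
    intro h; apply hb; ext; exact_mod_cast h.symm
  · simp

lemma absv_trunc (N : ℕ) (c : Fin N → F) : absv F (trunc F N c) ≤ 1 := by
  have := (absv_le_zpow_iff F (trunc F N c) 0).2 (by
    intro n hn
    rw [trunc, HahnSeries.coeff_sum]
    refine Finset.sum_eq_zero fun j _ => HahnSeries.coeff_single_of_ne ?_
    omega)
  simpa using this

/-- The truncated power series are equidistributed in balls of radius `q ^ (-k)`. -/
lemma count_trunc (N k : ℕ) (hk : k ≤ N) (z : LaurentSeries F) :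
    (∑ c : Fin N → F, if av F (z + trunc F N c) ≤ ((Fintype.card F : ℝ)⁻¹) ^ k then (1 : ℝ) else 0)
      ≤ (Fintype.card (Fin N → F) : ℝ) * ((Fintype.card F : ℝ)⁻¹) ^ k := by
  have hq := one_lt_cardR F
  have hq0 : (Fintype.card F : ℝ) ≠ 0 := by positivity
  rw [Finset.sum_boole]
  have h : (Finset.univ.filter fun c : Fin N → F =>
      av F (z + trunc F N c) ≤ ((Fintype.card F : ℝ)⁻¹) ^ k).card
      ≤ (Finset.univ : Finset (Fin (N - k) → F)).card := by
    refine Finset.card_le_card_of_injOn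
      (fun c j => c ⟨k + j, by have := j.2; omega⟩) (by simp) ?_
    intro c hc d hd hcd
    simp only [Finset.coe_filter, Finset.mem_univ, true_and, Set.mem_ofPred_eq, av_apply, inv_pow]
      at hc hd
    rw [← zpow_natCast, ← zpow_neg, absv_le_zpow_iff] at hc hd
    funext j
    by_cases hj : (j : ℕ) < k
    · have h1 := hc j (by exact_mod_cast hj)
      have h2 := hd j (by exact_mod_cast hj)
      rw [HahnSeries.coeff_add, trunc_coeff] at h1 h2
      exact add_left_cancel (h1.trans h2.symm)
    · have := congrFun hcd ⟨j - k, by have := j.2; omega⟩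
      simp only at this
      convert this using 2 <;> (ext; simp; omega)
  calc _ ≤ (((Finset.univ : Finset (Fin (N - k) → F)).card : ℕ) : ℝ) := by exact_mod_cast h
    _ = _ := by
      rw [Finset.card_univ, Fintype.card_fun, Fintype.card_fun]
      simp only [Fintype.card_fin]
      push_cast
      rw [inv_pow, pow_sub₀ _ hq0 hk]

end AbsoluteValue

/-! ### Counting matrices with small maximal minors -/

section Counting

/-- Column elimination: clearing the first column with the pivot `A 0 0` factors the determinant as
the pivot times the determinant of the Schur complement. -/
lemma det_schur {K : Type*} [Field K] {r : ℕ} (A : Matrix (Fin (r + 1)) (Fin (r + 1)) K)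
    (h : A 0 0 ≠ 0) :
    A.det = A 0 0 * (Matrix.of fun x y : Fin r =>
      A x.succ y.succ - A x.succ 0 / A 0 0 * A 0 y.succ).det := by
  set c : Fin (r + 1) → K := Fin.cons 0 (fun x => A x.succ 0 / A 0 0) with hc
  set B : Matrix (Fin (r + 1)) (Fin (r + 1)) K := Matrix.of fun i j => A i j - c i * A 0 j with hB
  have hB0 : ∀ j, B 0 j = A 0 j := fun j => by simp [hB, hc]
  rw [Matrix.det_eq_of_forall_row_eq_smul_add_const (A := A) (B := B) c 0 (by simp [hc])
    (fun i j => by rw [hB0]; simp [hB])]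
  rw [Matrix.det_succ_column_zero, Fin.sum_univ_succ, Finset.sum_eq_zero, add_zero]
  · rw [hB0]
    simp only [Fin.val_zero, pow_zero, one_mul]
    congr 2
  · intro x _
    have : B x.succ 0 = 0 := by simp [hB, hc, h]
    rw [this]; simp

variable {K : Type*} [Field K] (v : AbsoluteValue K ℝ) (ε : ℝ) {T : Type*} [Fintype T] (ι : T → K)

/-- A random vector is small with probability at most `ε ^ (k * p)`, its entries being independent. -/
lemma count_vec (k p : ℕ)
    (hT : ∀ z, (∑ a, if v (z + ι a) ≤ ε ^ k then (1 : ℝ) else 0) ≤ Fintype.card T * ε ^ k)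
    (z : Fin p → K) :
    (∑ a : Fin p → T, if ∀ l, v (z l + ι (a l)) ≤ ε ^ k then (1 : ℝ) else 0)
      ≤ (Fintype.card T : ℝ) ^ p * ε ^ (k * p) := by
  have : ∀ a : Fin p → T, (if ∀ l, v (z l + ι (a l)) ≤ ε ^ k then (1 : ℝ) else 0)
      = ∏ l, if v (z l + ι (a l)) ≤ ε ^ k then (1 : ℝ) else 0 := by
    intro a
    rw [Finset.prod_ite_zero]; simp
  simp_rw [this]
  rw [← Fintype.prod_sum (fun l b => if v (z l + ι b) ≤ ε ^ k then (1 : ℝ) else 0)]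
  calc _ ≤ ∏ _l : Fin p, (Fintype.card T : ℝ) * ε ^ k :=
        Finset.prod_le_prod (fun l _ => Finset.sum_nonneg fun _ _ => by positivity)
          fun l _ => hT (z l)
    _ = _ := by simp [mul_pow, pow_mul]

/-- All maximal minors of the `p × r` matrix `S + a` have absolute value at most `y`. The random part
`a` is indexed by columns. -/
def SmallMinors {p r : ℕ} (S : Matrix (Fin p) (Fin r) K) (a : Fin r → Fin p → T) (y : ℝ) : Prop :=
  ∀ f : Fin r → Fin p, v (Matrix.of fun x z => S (f x) z + ι (a z (f x))).det ≤ y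

omit [Fintype T] in
/-- If the maximal minors are small although the first column has a large entry (row `l`), then
the maximal minors of the Schur complement of that entry are small, with a correspondingly weaker
threshold. -/
lemma smallMinors_schur {p r : ℕ} (S : Matrix (Fin (p + 1)) (Fin (r + 2)) K)
    (c : Fin (p + 1) → T) (l : Fin (p + 1)) (b : Fin (r + 1) → T) (d : Fin (r + 1) → Fin p → T)
    {j k : ℕ} (hε : 0 < ε) (hjk : j ≤ k) (hl : ε ^ j ≤ v (S l 0 + ι (c l)))
    (h : SmallMinors v ι S (Fin.cons c fun y => l.insertNth (b y) (d y) : Fin (r + 2) → _)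
      (ε ^ k)) :
    SmallMinors v ι (Matrix.of fun x y => S (l.succAbove x) (Fin.succ y)
      - (S (l.succAbove x) 0 + ι (c (l.succAbove x))) / (S l 0 + ι (c l))
        * (S l (Fin.succ y) + ι (b y))) d (ε ^ (k - j)) := by
  have hpos : 0 < v (S l 0 + ι (c l)) := (pow_pos hε j).trans_le hl
  intro f
  have h1 := h (Fin.cons l fun x => l.succAbove (f x))
  rw [det_schur _ (by simpa using v.pos_iff.1 hpos), map_mul] at h1
  simp only [Matrix.of_apply, Fin.cons_zero, Fin.cons_succ, Fin.insertNth_apply_same,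
    Fin.insertNth_apply_succAbove] at h1
  have h2 : ε ^ j * ε ^ (k - j) = ε ^ k := by rw [← pow_add]; congr 1; omega
  rw [← h2] at h1
  have h3 := le_of_mul_le_mul_left (h1.trans (mul_le_mul_of_nonneg_right hl (by positivity))) hpos
  refine le_of_eq_of_le ?_ h3
  congr 2
  ext x y
  simp only [Matrix.of_apply]
  ring

/-- A random `(α + r) × (r + 1)` matrix over the valuation ring has all its maximal minors at most
`ε ^ k` with probability at most `2 ^ r * ε ^ (k * α)`, uniformly over translates. By induction
on `r`: eliminating the first column reduces to a smaller random matrix with a larger threshold. -/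
theorem count_main (hε : 0 < ε) (hε2 : ε ≤ 1 / 2) (N : ℕ)
    (hdisc : ∀ (x : K) (n : ℕ), ε ^ (n + 1) < v x → ε ^ n ≤ v x)
    (hT : ∀ k ≤ N, ∀ z, (∑ a, if v (z + ι a) ≤ ε ^ k then (1 : ℝ) else 0) ≤ Fintype.card T * ε ^ k)
    (α r : ℕ) :
    ∀ k ≤ N, ∀ S : Matrix (Fin (α + r)) (Fin (r + 1)) K,
      (∑ a : Fin (r + 1) → Fin (α + r) → T, if SmallMinors v ι S a (ε ^ k) then (1 : ℝ) else 0)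
        ≤ 2 ^ r * (Fintype.card T : ℝ) ^ ((α + r) * (r + 1)) * ε ^ (k * α) := by
  induction r with
  | zero =>
    intro k hk S
    rw [← Equiv.sum_comp (Equiv.funUnique (Fin 1) (Fin (α + 0) → T)).symm]
    calc _ ≤ ∑ a : Fin (α + 0) → T, if ∀ l, v (S l 0 + ι (a l)) ≤ ε ^ k then (1 : ℝ) else 0 := by
          gcongr with a
          split_ifs with h1 h2 h2
          · exact le_rfl
          · refine absurd (fun l => ?_) h2
            simpa [Matrix.det_fin_one] using h1 (fun _ => l)
          · exact zero_le_one
          · exact le_rfl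
      _ ≤ _ := count_vec v ε ι k _ (hT k hk) _
      _ = _ := by simp
  | succ r ih =>
    intro k hk S
    set Q : ℝ := ((Fintype.card T : ℕ) : ℝ) with hQ
    have hQ0 : 0 ≤ Q := by positivity
    set p := α + r with hp
    set B : ℝ := 2 ^ r * Q ^ ((p + 1) * (r + 1)) with hB
    -- For a fixed first column `c`.
    have inner : ∀ c : Fin (p + 1) → T,
        (∑ a : Fin (r + 1) → Fin (p + 1) → T,
          if SmallMinors v ι S (Fin.cons c a : Fin (r + 2) → _) (ε ^ k) then (1 : ℝ) else 0)
        ≤ ∑ j ∈ Finset.range (k + 1), B * ε ^ ((k - j) * α) *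
            (if j = 0 ∨ ∀ l, v (S l 0 + ι (c l)) ≤ ε ^ j then 1 else 0) := by
      intro c
      have key : ∀ j ≤ k, (j = 0 ∨ ∀ l, v (S l 0 + ι (c l)) ≤ ε ^ j) →
          (∑ a : Fin (r + 1) → Fin (p + 1) → T,
            if SmallMinors v ι S (Fin.cons c a : Fin (r + 2) → _) (ε ^ k) then (1 : ℝ) else 0)
            ≤ B * ε ^ ((k - j) * α) →
          (∑ a : Fin (r + 1) → Fin (p + 1) → T,
            if SmallMinors v ι S (Fin.cons c a : Fin (r + 2) → _) (ε ^ k) then (1 : ℝ) else 0)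
          ≤ ∑ j ∈ Finset.range (k + 1), B * ε ^ ((k - j) * α) *
            (if j = 0 ∨ ∀ l, v (S l 0 + ι (c l)) ≤ ε ^ j then 1 else 0) := by
        intro j hj hc h
        refine h.trans ?_
        refine le_trans (le_of_eq ?_) (Finset.single_le_sum (f := fun j => B * ε ^ ((k - j) * α) *
            (if j = 0 ∨ ∀ l, v (S l 0 + ι (c l)) ≤ ε ^ j then (1 : ℝ) else 0)) (fun i _ => ?_)
            (Finset.mem_range.2 (Nat.lt_succ_of_le hj)))
        · simp [hc]
        · positivity
      by_cases hall : k = 0 ∨ ∀ l, v (S l 0 + ι (c l)) ≤ ε ^ k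
      -- the trivial bound by the number of all matrices
      · refine key k le_rfl hall ?_
        calc _ ≤ ∑ a : Fin (r + 1) → Fin (p + 1) → T, (1 : ℝ) := by
              gcongr with a; split_ifs <;> norm_num
          _ = Q ^ ((p + 1) * (r + 1)) := by
              simp [hQ, pow_mul]
          _ ≤ _ := by
              simp only [hB, Nat.sub_self, zero_mul, pow_zero, mul_one]
              exact le_mul_of_one_le_left (by positivity) (one_le_pow₀ (by norm_num))
      · have hex : ∃ j, ¬ (j = 0 ∨ ∀ l, v (S l 0 + ι (c l)) ≤ ε ^ j) := ⟨k, hall⟩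
        obtain ⟨hj1, hj2⟩ : ¬ (Nat.find hex = 0 ∨ ∀ l, v (S l 0 + ι (c l)) ≤ ε ^ Nat.find hex) ∧
          ∀ i < Nat.find hex, ¬ ¬ (i = 0 ∨ ∀ l, v (S l 0 + ι (c l)) ≤ ε ^ i) :=
          ⟨Nat.find_spec hex, fun i hi => Nat.find_min hex hi⟩
        have hj3 : Nat.find hex ≤ k := Nat.find_min' hex hall
        generalize Nat.find hex = J at hj1 hj2 hj3
        obtain ⟨j, rfl⟩ : ∃ j, J = j + 1 := Nat.exists_eq_succ_of_ne_zero (fun h => hj1 (Or.inl h))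
        have hj := not_not.1 (hj2 j (Nat.lt_succ_self j))
        refine key j (by omega) hj ?_
        push Not at hj1
        obtain ⟨l, hl⟩ := hj1.2
        have hl' := hdisc _ _ hl
        let E : (Fin (r + 1) → T) × (Fin (r + 1) → Fin p → T) ≃ (Fin (r + 1) → Fin (p + 1) → T) :=
          (Equiv.arrowProdEquivProdArrow _ _ _).symm.trans
            (Equiv.piCongrRight fun _ => Fin.insertNthEquiv (fun _ => T) l)
        rw [← Equiv.sum_comp E, Fintype.sum_prod_type]
        calc _ ≤ ∑ b : Fin (r + 1) → T, 2 ^ r * Q ^ (p * (r + 1)) * ε ^ ((k - j) * α) := by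
              refine Finset.sum_le_sum fun b _ => ?_
              let S' : Matrix (Fin p) (Fin (r + 1)) K :=
                Matrix.of fun x y => S (l.succAbove x) (Fin.succ y)
                  - (S (l.succAbove x) 0 + ι (c (l.succAbove x))) / (S l 0 + ι (c l))
                  * (S l (Fin.succ y) + ι (b y))
              refine le_trans (Finset.sum_le_sum fun d _ => ?_) (ih (k - j) (by omega) S')
              split_ifs with h1 h2 h2
              · exact le_rfl
              · exact absurd (smallMinors_schur v ε ι S c l b d hε (by omega) hl' h1) h2
              · exact zero_le_one
              · exact le_rfl
          _ = _ := by
              simp only [Finset.sum_const, Finset.card_univ, Fintype.card_fun, Fintype.card_fin,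
                nsmul_eq_mul, hB]
              push_cast
              rw [← hQ, add_mul p 1, pow_add]
              ring
    refine le_of_eq_of_le
      (Equiv.sum_comp (Fin.consEquiv (fun _ : Fin (r + 2) => Fin (p + 1) → T))
        (fun a => if SmallMinors v ι S a (ε ^ k) then (1 : ℝ) else 0)).symm ?_
    rw [Fintype.sum_prod_type]
    calc _ ≤ ∑ c : Fin (p + 1) → T, ∑ j ∈ Finset.range (k + 1), B * ε ^ ((k - j) * α) *
            (if j = 0 ∨ ∀ l, v (S l 0 + ι (c l)) ≤ ε ^ j then (1 : ℝ) else 0) :=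
          Finset.sum_le_sum fun c _ => inner c
      _ = ∑ j ∈ Finset.range (k + 1), B * ε ^ ((k - j) * α) * ∑ c : Fin (p + 1) → T,
            (if j = 0 ∨ ∀ l, v (S l 0 + ι (c l)) ≤ ε ^ j then (1 : ℝ) else 0) := by
          rw [Finset.sum_comm]; simp_rw [Finset.mul_sum]
      _ ≤ ∑ j ∈ Finset.range (k + 1), B * Q ^ (p + 1) * ε ^ (k * α) * (1 / 2) ^ j := by
          refine Finset.sum_le_sum fun j hj => ?_
          have hjk : j ≤ k := by simpa [Nat.lt_succ_iff] using hj
          have h1 : (∑ c : Fin (p + 1) → T,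
              (if j = 0 ∨ ∀ l, v (S l 0 + ι (c l)) ≤ ε ^ j then (1 : ℝ) else 0))
              ≤ Q ^ (p + 1) * ε ^ (j * (p + 1)) := by
            rcases Nat.eq_zero_or_pos j with rfl | hj0
            · simp [hQ]
            · simp only [hj0.ne', false_or]
              exact count_vec v ε ι j (p + 1) (hT j (by omega)) (fun l => S l 0)
          have h2 : ε ^ ((k - j) * α) * ε ^ (j * (p + 1)) ≤ ε ^ (k * α) * (1 / 2) ^ j := by
            have : (k - j) * α + j * (p + 1) = k * α + j * r + j := by
              obtain ⟨i, rfl⟩ := Nat.exists_eq_add_of_le hjk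
              rw [Nat.add_sub_cancel_left, hp]; ring
            rw [← pow_add, this, pow_add, pow_add, mul_assoc]
            gcongr
            calc ε ^ (j * r) * ε ^ j ≤ 1 * ε ^ j := by
                  gcongr; exact pow_le_one₀ hε.le (by linarith)
              _ ≤ _ := by rw [one_mul]; gcongr
          calc _ ≤ B * ε ^ ((k - j) * α) * (Q ^ (p + 1) * ε ^ (j * (p + 1))) := by gcongr
            _ = B * Q ^ (p + 1) * (ε ^ ((k - j) * α) * ε ^ (j * (p + 1))) := by ring
            _ ≤ B * Q ^ (p + 1) * (ε ^ (k * α) * (1 / 2) ^ j) := by gcongr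
            _ = _ := by ring
      _ ≤ B * Q ^ (p + 1) * ε ^ (k * α) * 2 := by
          rw [← Finset.mul_sum]
          gcongr
          have := sum_geometric_two_le (k + 1)
          simpa using this
      _ = _ := by
          rw [hB]
          have : (α + (r + 1)) * (r + 1 + 1) = (p + 1) * (r + 1) + (p + 1) := by rw [hp]; ring
          rw [this, pow_add Q ((p + 1) * (r + 1)), pow_succ (2 : ℝ) r]
          ring

end Counting

/-! ### Minors of `g_t u_s V` -/

section Minors

variable (F : Type*) [Field F] [Fintype F]

lemma absv_zero : absv F 0 = 0 := (absv_eq_zero F).2 rfl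

lemma absv_one : absv F 1 = 1 := map_one (av F)

lemma absv_sum_le_one {J : Type*} (T : Finset J) (f : J → LaurentSeries F)
    (h : ∀ j ∈ T, absv F (f j) ≤ 1) : absv F (∑ j ∈ T, f j) ≤ 1 :=
  Finset.sum_induction f (fun x => absv F x ≤ 1)
    (fun x y hx hy => (absv_add_le F x y).trans (max_le hx hy)) (by simp [absv_zero]) h

lemma absv_sum_lt_one {J : Type*} (T : Finset J) (f : J → LaurentSeries F)
    (h : ∀ j ∈ T, absv F (f j) < 1) : absv F (∑ j ∈ T, f j) < 1 :=
  Finset.sum_induction f (fun x => absv F x < 1)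
    (fun x y hx hy => (absv_add_le F x y).trans_lt (max_lt hx hy)) (by simp [absv_zero]) h

lemma absv_mul_le_one {x y : LaurentSeries F} (hx : absv F x ≤ 1) (hy : absv F y ≤ 1) :
    absv F (x * y) ≤ 1 := by
  rw [absv_mul]; exact mul_le_one₀ hx (absv_nonneg F y) hy

lemma absv_mul_lt_one {x y : LaurentSeries F} (hx : absv F x ≤ 1) (hy : absv F y < 1) :
    absv F (x * y) < 1 := by
  rw [absv_mul]
  exact mul_lt_one_of_nonneg_of_lt_one_right hx (absv_nonneg F y) hy

lemma absv_eq_one_of_sub {x : LaurentSeries F} (h : absv F (x - 1) < 1) : absv F x = 1 := by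
  apply le_antisymm
  · have := absv_add_le F (x - 1) 1
    rw [sub_add_cancel, absv_one] at this
    exact this.trans (max_le h.le le_rfl)
  · by_contra! hx
    have := absv_add_le F (-(x - 1)) x
    have h2 : absv F (-(x - 1)) = absv F (x - 1) := map_neg_eq_map (av F) _
    rw [show -(x - 1) + x = 1 by ring, absv_one, h2] at this
    exact absurd this (not_le.2 (max_lt h hx))

/-- A matrix over the valuation ring that reduces to a block unipotent matrix over the residue field
has determinant of absolute value one. -/
lemma absv_det_eq_one {i : ℕ} (D : Matrix (Fin i) (Fin i) (LaurentSeries F)) (J : Fin i → Prop)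
    (h1 : ∀ j j', absv F (D j j') ≤ 1)
    (h2 : ∀ j j', ¬ J j' → absv F (D j j' - (1 : Matrix (Fin i) (Fin i) (LaurentSeries F)) j j') < 1)
    (h3 : ∀ j j', J j → D j j' = (1 : Matrix (Fin i) (Fin i) (LaurentSeries F)) j j') :
    absv F D.det = 1 := by
  apply absv_eq_one_of_sub
  rw [Matrix.det_apply', ← Finset.add_sum_erase _ _ (Finset.mem_univ (1 : Equiv.Perm (Fin i))),
    add_sub_right_comm]
  refine (absv_add_le F _ _).trans_lt (max_lt ?_ (absv_sum_lt_one F _ _ ?_))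
  · simp only [Equiv.Perm.sign_one, Units.val_one, Int.cast_one, one_mul, Equiv.Perm.coe_one, id]
    refine Finset.prod_induction (fun j => D j j) (fun x => absv F (x - 1) < 1) ?_
      (by simp [absv_zero]) ?_
    · intro x y hx hy
      rw [show x * y - 1 = y * (x - 1) + (y - 1) by ring]
      exact (absv_add_le F _ _).trans_lt
        (max_lt (absv_mul_lt_one F (absv_eq_one_of_sub F hy).le hx) hy)
    · intro j _
      by_cases hj : J j
      · rw [h3 j j hj]; simp [absv_zero]
      · simpa using h2 j j hj
  · intro σ hσ
    have hσ1 : σ ≠ 1 := Finset.ne_of_mem_erase hσ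
    have hs : absv F (((Equiv.Perm.sign σ : ℤ) : LaurentSeries F)) ≤ 1 := by
      rcases Int.units_eq_one_or (Equiv.Perm.sign σ) with h | h
      · simp [h, absv_one]
      · have : absv F (-1) = 1 := (map_neg_eq_map (av F) 1).trans (absv_one F)
        simp [h, this]
    refine absv_mul_lt_one F hs ?_
    obtain ⟨j, hj⟩ : ∃ j, absv F (D (σ j) j) < 1 := by
      obtain ⟨j, hj⟩ : ∃ j, σ j ≠ j := by
        by_contra! h; exact hσ1 (Equiv.ext h)
      by_cases hJ : J j
      · by_cases hJ' : J (σ j)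
        · exact ⟨j, by rw [h3 _ _ hJ', Matrix.one_apply_ne hj, absv_zero]; exact one_pos⟩
        · refine ⟨σ j, ?_⟩
          have := h2 (σ (σ j)) (σ j) hJ'
          rwa [Matrix.one_apply_ne (fun h => hj (σ.injective h)), sub_zero] at this
      · have := h2 (σ j) j hJ
        rw [Matrix.one_apply_ne hj, sub_zero] at this
        exact ⟨j, this⟩
    rw [← Finset.mul_prod_erase _ _ (Finset.mem_univ j), mul_comm]
    refine absv_mul_lt_one F ?_ hj
    exact Finset.prod_induction _ (fun x => absv F x ≤ 1) (fun x y => absv_mul_le_one F)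
      (absv_one F).le (fun k _ => h1 _ _)

/-- If the rows of `A` outside the range of `g` are rows of the identity matrix, then `det A` is
the minor of `A` on the rows and columns in the range of `g`. -/
lemma det_eq_minor {R : Type*} [CommRing R] {i a : ℕ} (A : Matrix (Fin i) (Fin i) R)
    (g : Fin a → Fin i) (hg : Function.Injective g)
    (h : ∀ j, j ∉ Set.range g → ∀ j', A j j' = (1 : Matrix (Fin i) (Fin i) R) j j') :
    A.det = (A.submatrix g g).det := by
  rw [Matrix.twoBlockTriangular_det A (fun j => j ∈ Set.range g)]
  · have h1 : A.toSquareBlockProp (fun j => ¬ j ∈ Set.range g) = 1 := by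
      ext x y
      rw [Matrix.toSquareBlockProp_def, Matrix.of_apply, h _ x.2, Matrix.one_apply, Matrix.one_apply]
      simp [Subtype.ext_iff]
    rw [h1, Matrix.det_one, mul_one]
    have h2 := Matrix.det_submatrix_equiv_self (Equiv.ofInjective g hg)
      (A.toSquareBlockProp fun j => j ∈ Set.range g)
    rw [Matrix.toSquareBlockProp_def] at h2 ⊢
    convert h2.symm using 1
    · congr!
    · rfl
  · intro x hx y hy
    rw [h x hx, Matrix.one_apply_ne]
    rintro rfl; exact hx hy

variable {m n i : ℕ}

/-- `u_s` with rows and columns indexed by `Fin m ⊕ Fin n`. -/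
noncomputable def uBlk (s : Matrix (Fin m) (Fin n) (LaurentSeries F)) :
    Matrix (Fin m ⊕ Fin n) (Fin m ⊕ Fin n) (LaurentSeries F) := Matrix.fromBlocks 1 s 0 1

omit [Fintype F] in
lemma uBlk_inl (s : Matrix (Fin m) (Fin n) (LaurentSeries F))
    (W : Matrix (Fin m ⊕ Fin n) (Fin i) (LaurentSeries F)) (k : Fin m) (j : Fin i) :
    (uBlk F s * W) (Sum.inl k) j = W (Sum.inl k) j + ∑ l, s k l * W (Sum.inr l) j := by
  simp [uBlk, Matrix.mul_apply, Matrix.one_apply]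

omit [Fintype F] in
lemma uBlk_inr (s : Matrix (Fin m) (Fin n) (LaurentSeries F))
    (W : Matrix (Fin m ⊕ Fin n) (Fin i) (LaurentSeries F)) (l : Fin n) (j : Fin i) :
    (uBlk F s * W) (Sum.inr l) j = W (Sum.inr l) j := by
  simp [uBlk, Matrix.mul_apply, Matrix.one_apply]

/-- A matrix normalized with respect to a choice `e` of `i` rows: the rows `e` form the identity
matrix, all entries are integral, and the entries in a lower row and a column whose pivot row is an
upper one are in the maximal ideal. -/
structure IsNormalized (W : Matrix (Fin m ⊕ Fin n) (Fin i) (LaurentSeries F))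
    (e : Fin i → Fin m ⊕ Fin n) : Prop where
  pivot : ∀ j j', W (e j) j' = (1 : Matrix (Fin i) (Fin i) (LaurentSeries F)) j j'
  le_one : ∀ x j, absv F (W x j) ≤ 1
  lt_one : ∀ l j k, e j = Sum.inl k → absv F (W (Sum.inr l) j) < 1

variable {F} in
/-- Left multiplication by `u_s` keeps the pivot block invertible over the valuation ring. -/
lemma IsNormalized.absv_det {W : Matrix (Fin m ⊕ Fin n) (Fin i) (LaurentSeries F)}
    {e : Fin i → Fin m ⊕ Fin n} (hW : IsNormalized F W e)
    {s : Matrix (Fin m) (Fin n) (LaurentSeries F)} (hs : s ∈ intMat F m n) :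
    absv F ((uBlk F s * W).submatrix e id).det = 1 := by
  apply absv_det_eq_one F _ (fun j => ∃ l, e j = Sum.inr l)
  · intro j j'
    simp only [Matrix.submatrix_apply, id]
    rcases e j with k | l
    · rw [uBlk_inl]
      exact (absv_add_le F _ _).trans (max_le (hW.le_one _ _)
        (absv_sum_le_one F _ _ fun l _ => absv_mul_le_one F (hs k l) (hW.le_one _ _)))
    · rw [uBlk_inr]; exact hW.le_one _ _
  · intro j j' hj'
    obtain ⟨k', hk'⟩ : ∃ k', e j' = Sum.inl k' := by
      rcases h : e j' with k | l
      · exact ⟨k, rfl⟩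
      · exact absurd ⟨l, h⟩ hj'
    simp only [Matrix.submatrix_apply, id]
    rw [← hW.pivot j j']
    rcases e j with k | l
    · rw [uBlk_inl, add_sub_cancel_left]
      exact absv_sum_lt_one F _ _ fun l _ => absv_mul_lt_one F (hs k l) (hW.lt_one l j' k' hk')
    · rw [uBlk_inr, sub_self, absv_zero]; exact one_pos
  · rintro j j' ⟨l, hl⟩
    simp only [Matrix.submatrix_apply, id]
    rw [hl, uBlk_inr, ← hl, hW.pivot]

section Core

variable {A B : Type*} [Fintype A] [Fintype B] (ρA : A → Fin m) (ρB : B → Fin n)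

/-- The `m × n` matrix with the entries of `Z` placed in the rows `ρA` and the columns `ρB`. -/
noncomputable def place (Z : Matrix A B (LaurentSeries F)) :
    Matrix (Fin m) (Fin n) (LaurentSeries F) :=
  Matrix.of fun k l => ∑ x, ∑ y, if ρA x = k ∧ ρB y = l then Z x y else 0

lemma place_mem {Z : Matrix A B (LaurentSeries F)} (hZ : ∀ x y, absv F (Z x y) ≤ 1) :
    place F ρA ρB Z ∈ intMat F m n := by
  intro k l
  refine absv_sum_le_one F _ _ fun x _ => absv_sum_le_one F _ _ fun y _ => ?_
  split_ifs
  · exact hZ x y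
  · rw [absv_zero]; exact zero_le_one

variable {F ρA ρB} {W : Matrix (Fin m ⊕ Fin n) (Fin i) (LaurentSeries F)}
    {e : Fin i → Fin m ⊕ Fin n} {g : B → Fin i}

lemma place_row (hW : IsNormalized F W e) (hA : Function.Injective ρA)
    (hg : ∀ y, e (g y) = Sum.inr (ρB y))
    (s : Matrix (Fin m) (Fin n) (LaurentSeries F)) (Z : Matrix A B (LaurentSeries F)) (x : A)
    (j : Fin i) :
    (uBlk F (place F ρA ρB Z + s) * W) (Sum.inl (ρA x)) j
      = (uBlk F s * W) (Sum.inl (ρA x)) j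
        + ∑ y, Z x y * (1 : Matrix (Fin i) (Fin i) (LaurentSeries F)) (g y) j := by
  rw [uBlk_inl, uBlk_inl, add_assoc]
  congr 1
  simp only [Matrix.add_apply, add_mul, Finset.sum_add_distrib]
  rw [add_comm]
  congr 1
  have h1 : ∀ l, place F ρA ρB Z (ρA x) l = ∑ y, if ρB y = l then Z x y else 0 := by
    intro l
    rw [place, Matrix.of_apply, Finset.sum_eq_single x]
    · simp
    · intro x' _ hx'
      refine Finset.sum_eq_zero fun y _ => if_neg fun h => hx' (hA h.1)
    · simp
  simp_rw [h1, Finset.sum_mul]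
  rw [Finset.sum_comm]
  refine Finset.sum_congr rfl fun y _ => ?_
  rw [← hW.pivot, hg, Finset.sum_eq_single (ρB y)]
  · simp
  · intro l _ hl; rw [if_neg (Ne.symm hl), zero_mul]
  · simp

omit [Fintype F] in
lemma place_row_of_ne (s : Matrix (Fin m) (Fin n) (LaurentSeries F))
    (Z : Matrix A B (LaurentSeries F)) (x : Fin m ⊕ Fin n) (hx : ∀ a, x ≠ Sum.inl (ρA a))
    (j : Fin i) :
    (uBlk F (place F ρA ρB Z + s) * W) x j = (uBlk F s * W) x j := by
  rcases x with k | l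
  · rw [uBlk_inl, uBlk_inl]
    congr 1
    refine Finset.sum_congr rfl fun l _ => ?_
    have : place F ρA ρB Z k l = 0 := by
      rw [place, Matrix.of_apply]
      refine Finset.sum_eq_zero fun a _ => Finset.sum_eq_zero fun y _ => if_neg fun h => ?_
      exact hx a (by rw [h.1])
    rw [Matrix.add_apply, this, zero_add]
  · rw [uBlk_inr, uBlk_inr]

/-- Replacing some pivot rows `g ∘ y` (all of them lower rows) by the upper rows `ρA ∘ x` gives a
minor of `u_s W` which equals, up to a unit, a minor of a matrix `S` attached to `s`. Translating `s`
by the matrix `Z` placed in position `(ρA, ρB)` translates `S` by `Z`: `S` is the block in position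
`(ρA, g)` of `u_s W D⁻¹`, where `D` consists of the rows `e` of `u_s W`, which are not affected by
the translation. -/
lemma exists_schur (hW : IsNormalized F W e) (hA : Function.Injective ρA)
    (hAe : ∀ x j, e j ≠ Sum.inl (ρA x)) (hg : ∀ y, e (g y) = Sum.inr (ρB y))
    (hgi : Function.Injective g)
    {s : Matrix (Fin m) (Fin n) (LaurentSeries F)} (hs : s ∈ intMat F m n) :
    ∃ S : Matrix A B (LaurentSeries F), ∀ Z : Matrix A B (LaurentSeries F),
      ∀ {a : ℕ} (x : Fin a → A) (y : Fin a → B), Function.Injective y →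
      ∃ f : Fin i → Fin m ⊕ Fin n, (∀ j, (∀ z, j ≠ g (y z)) → f j = e j) ∧
        (∀ z, f (g (y z)) = Sum.inl (ρA (x z))) ∧
        absv F ((uBlk F (place F ρA ρB Z + s) * W).submatrix f id).det
          = absv F ((S + Z).submatrix x y).det := by
  set D := (uBlk F s * W).submatrix e id with hD
  have hD1 : absv F D.det = 1 := hW.absv_det hs
  have hDu : IsUnit D.det := by
    rw [isUnit_iff_ne_zero]; intro h; rw [h, absv_zero] at hD1; exact zero_ne_one hD1
  refine ⟨Matrix.of fun x y => (uBlk F s * W * D⁻¹) (Sum.inl (ρA x)) (g y), ?_⟩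
  intro Z a x y hy
  set M := uBlk F (place F ρA ρB Z + s) * W with hM
  set N := M * D⁻¹ with hN
  have hMD : M.submatrix e id = D := by
    ext j j'
    rw [Matrix.submatrix_apply, hM, place_row_of_ne s Z (e j) (fun a => hAe a j)]
    rfl
  have hDinv : ∀ y j, D⁻¹ (g y) j = (1 : Matrix (Fin i) (Fin i) (LaurentSeries F)) (g y) j := by
    intro y j
    rw [← Matrix.mul_nonsing_inv D hDu, Matrix.mul_apply, Finset.sum_eq_single (g y)]
    · have : D (g y) (g y) = 1 := by
        rw [hD, Matrix.submatrix_apply, hg, uBlk_inr, ← hg, id, hW.pivot, Matrix.one_apply_eq]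
      rw [this, one_mul]
    · intro j' _ hj'
      have : D (g y) j' = 0 := by
        rw [hD, Matrix.submatrix_apply, hg, uBlk_inr, ← hg, id, hW.pivot,
          Matrix.one_apply_ne hj'.symm]
      rw [this, zero_mul]
    · simp
  have hNe : ∀ j j', N (e j) j' = (1 : Matrix (Fin i) (Fin i) (LaurentSeries F)) j j' := by
    intro j j'
    have h1 : ∀ k, M (e j) k = D j k := fun k => congrFun (congrFun hMD j) k
    rw [← Matrix.mul_nonsing_inv D hDu, hN, Matrix.mul_apply, Matrix.mul_apply]
    simp only [h1]
  have hNA : ∀ x y, N (Sum.inl (ρA x)) (g y)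
      = (uBlk F s * W * D⁻¹) (Sum.inl (ρA x)) (g y) + Z x y := by
    intro x y
    have hrow : ∀ j, M (Sum.inl (ρA x)) j = _ := place_row hW hA hg s Z x
    rw [hN, Matrix.mul_apply, Matrix.mul_apply]
    simp only [hrow, add_mul, Finset.sum_add_distrib]
    refine congrArg₂ _ rfl ?_
    simp only [Finset.sum_mul]
    rw [Finset.sum_comm, Finset.sum_eq_single y]
    · rw [Finset.sum_eq_single (g y)]
      · rw [hDinv]; simp
      · intro j _ hj; rw [Matrix.one_apply_ne hj.symm]; simp
      · simp
    · intro y' _ hy'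
      refine Finset.sum_eq_zero fun j _ => ?_
      by_cases hj : g y' = j
      · rw [← hj, hDinv, Matrix.one_apply_ne (fun h => hy' (hgi h)), mul_zero]
      · rw [Matrix.one_apply_ne hj]; simp
    · simp
  have hinj : Function.Injective (g ∘ y) := hgi.comp hy
  let f : Fin i → Fin m ⊕ Fin n := fun j =>
    if h : ∃ z, g (y z) = j then Sum.inl (ρA (x h.choose)) else e j
  have hf1 : ∀ j, (∀ z, j ≠ g (y z)) → f j = e j := by
    intro j hj
    exact dif_neg (fun ⟨z, hz⟩ => hj z hz.symm)
  have hf2 : ∀ z, f (g (y z)) = Sum.inl (ρA (x z)) := by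
    intro z
    have h : ∃ z', g (y z') = g (y z) := ⟨z, rfl⟩
    have h2 : h.choose = z := hinj h.choose_spec
    simp only [f, dif_pos h]
    rw [h2]
  refine ⟨f, hf1, hf2, ?_⟩
  have hMN : M.submatrix f id = N.submatrix f id * D := by
    have : M = N * D := by rw [hN, Matrix.mul_assoc, Matrix.nonsing_inv_mul D hDu, Matrix.mul_one]
    conv_lhs => rw [this]
    rfl
  rw [hMN, Matrix.det_mul, absv_mul, hD1, mul_one,
    det_eq_minor (N.submatrix f id) (g ∘ y) hinj]
  · congr 2
    ext z z'
    simp only [Matrix.submatrix_apply, Function.comp, id, hf2, hNA, Matrix.add_apply,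
      Matrix.of_apply]
  · intro j hj j'
    rw [Matrix.submatrix_apply, hf1 j (fun z hz => hj ⟨z, hz.symm⟩)]
    exact hNe j j'

end Core

end Minors

/-! ### Reduction to the maximal minors of a translated block -/

section Reduction

variable (F : Type*) [Field F] [Fintype F]

lemma wedgeNorm_nonneg {d i : ℕ} (M : Matrix (Fin d) (Fin i) (LaurentSeries F)) :
    0 ≤ wedgeNorm F M := Real.iSup_nonneg fun _ => absv_nonneg F _

/-- Rows may be chosen in any order, and with repetitions. -/
lemma absv_det_le_wedgeNorm {d i : ℕ} (M : Matrix (Fin d) (Fin i) (LaurentSeries F))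
    (f : Fin i → Fin d) : absv F (M.submatrix f id).det ≤ wedgeNorm F M := by
  by_cases hf : Function.Injective f
  · let I : {I : Finset (Fin d) // I.card = i} :=
      ⟨Finset.univ.image f, by rw [Finset.card_image_of_injective _ hf]; simp⟩
    let f' : Fin i → {x // x ∈ I.1} := fun j => ⟨f j, Finset.mem_image_of_mem f (Finset.mem_univ j)⟩
    have hf' : Function.Bijective f' := by
      constructor
      · intro a b hab
        exact hf (congrArg Subtype.val hab)
      · rintro ⟨x, hx⟩
        obtain ⟨j, -, hj⟩ := Finset.mem_image.1 hx
        exact ⟨j, Subtype.ext hj⟩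
    let σ : Equiv.Perm (Fin i) := (Equiv.ofBijective f' hf').trans (I.1.orderIsoOfFin I.2).symm.toEquiv
    have hσ : ∀ j, ((I.1.orderIsoOfFin I.2 (σ j) : {x // x ∈ I.1}) : Fin d) = f j := by
      intro j
      simp [σ, f']
    have h1 : M.submatrix f id = (M.submatrix
        (fun a : Fin i => ((I.1.orderIsoOfFin I.2 a : {x // x ∈ I.1}) : Fin d)) id).submatrix σ id := by
      ext a b
      simp only [Matrix.submatrix_apply, hσ, id]
    have h2 : absv F (M.submatrix f id).det = absv F (minor F M I) := by
      rw [h1, Matrix.det_permute, absv_mul, minor]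
      rcases Int.units_eq_one_or (Equiv.Perm.sign σ) with h | h
      · simp [h, absv_one]
      · have : absv F (-1) = 1 := (map_neg_eq_map (av F) 1).trans (absv_one F)
        simp [h, this]
    rw [h2]
    exact le_ciSup (f := fun I : {I : Finset (Fin d) // I.card = i} => absv F (minor F M I))
      (Set.finite_range _).bddAbove I
  · simp only [Function.Injective, not_forall] at hf
    obtain ⟨a, b, hab, hne⟩ := hf
    rw [Matrix.det_zero_of_row_eq hne (by ext j; simp [hab]), absv_zero]
    exact wedgeNorm_nonneg F M

variable {m n i : ℕ}

/-- The number of lower rows in a choice of rows. -/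
def numLower (f : Fin i → Fin m ⊕ Fin n) : ℕ := (Finset.univ.filter fun j => (f j).isRight).card

variable {F} in
/-- Choosing a maximal minor, and among those one with the largest number of lower rows, normalizes
a matrix by right multiplication. -/
lemma exists_normalized (V : Matrix (Fin (m + n)) (Fin i) (LaurentSeries F))
    (hV : wedgeNorm F V ≠ 0) :
    ∃ (e : Fin i → Fin m ⊕ Fin n) (W : Matrix (Fin m ⊕ Fin n) (Fin i) (LaurentSeries F))
      (D : Matrix (Fin i) (Fin i) (LaurentSeries F)),
      V.submatrix finSumFinEquiv id = W * D ∧ absv F D.det = wedgeNorm F V ∧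
        IsNormalized F W e := by
  set V' := V.submatrix (finSumFinEquiv (m := m) (n := n)) id with hV'
  let φ : (Fin i → Fin m ⊕ Fin n) → ℝ := fun f => absv F (V'.submatrix f id).det
  have hle : ∀ f, φ f ≤ wedgeNorm F V := fun f =>
    absv_det_le_wedgeNorm F V (fun j => finSumFinEquiv (f j))
  -- a choice of rows realizing the norm
  obtain ⟨f₀, hf₀⟩ : ∃ f, φ f = wedgeNorm F V := by
    have hne : Nonempty {I : Finset (Fin (m + n)) // I.card = i} := by
      by_contra h
      rw [not_nonempty_iff] at h
      exact hV (Real.iSup_of_isEmpty _)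
    obtain ⟨I, hI⟩ := exists_eq_ciSup_of_finite
      (f := fun I : {I : Finset (Fin (m + n)) // I.card = i} => absv F (minor F V I))
    refine ⟨fun a => finSumFinEquiv.symm
      ((I.1.orderIsoOfFin I.2 a : {x // x ∈ I.1}) : Fin (m + n)), ?_⟩
    refine Eq.trans ?_ hI
    simp only [φ, minor, hV']
    congr 2
    ext a b
    simp
  obtain ⟨e, he, hmax⟩ := Finset.exists_max_image
    (Finset.univ.filter fun f => φ f = wedgeNorm F V) numLower ⟨f₀, by simp [hf₀]⟩
  replace he : φ e = wedgeNorm F V := by simpa using he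
  set D := V'.submatrix e id with hD
  have hDu : IsUnit D.det := by
    rw [isUnit_iff_ne_zero]
    intro h
    apply hV
    rw [← he]
    simp only [φ, ← hD, h, absv_zero]
  have hWD : V' = V' * D⁻¹ * D := by
    rw [Matrix.mul_assoc, Matrix.nonsing_inv_mul D hDu, Matrix.mul_one]
  have hpiv : ∀ j j', (V' * D⁻¹) (e j) j'
      = (1 : Matrix (Fin i) (Fin i) (LaurentSeries F)) j j' := by
    intro j j'
    rw [← Matrix.mul_nonsing_inv D hDu, Matrix.mul_apply, Matrix.mul_apply]
    rfl
  have hupd : ∀ x j, φ (Function.update e j x) = absv F ((V' * D⁻¹) x j) * wedgeNorm F V := by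
    intro x j
    have h1 : V'.submatrix (Function.update e j x) id
        = (V' * D⁻¹).submatrix (Function.update e j x) id * D := by
      conv_lhs => rw [hWD]
      rfl
    have h2 : (V' * D⁻¹).submatrix (Function.update e j x) id
        = (1 : Matrix (Fin i) (Fin i) (LaurentSeries F)).updateRow j ((V' * D⁻¹) x) := by
      ext a b
      rw [Matrix.submatrix_apply, Matrix.updateRow_apply]
      split_ifs with h
      · rw [h, Function.update_self]; rfl
      · rw [Function.update_of_ne h, hpiv]; rfl
    have h3 : ((1 : Matrix (Fin i) (Fin i) (LaurentSeries F)).updateRow j ((V' * D⁻¹) x)).det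
        = (V' * D⁻¹) x j := by
      rw [← Matrix.cramer_transpose_apply, Matrix.transpose_one, Matrix.cramer_one]
      rfl
    simp only [φ]
    rw [h1, h2, Matrix.det_mul, h3, absv_mul]
    congr 1
  have hpos : 0 < wedgeNorm F V := lt_of_le_of_ne (wedgeNorm_nonneg F V) (Ne.symm hV)
  have hle1 : ∀ x j, absv F ((V' * D⁻¹) x j) ≤ 1 := by
    intro x j
    have := hle (Function.update e j x)
    rw [hupd] at this
    exact le_of_mul_le_mul_right (by rwa [one_mul]) hpos
  refine ⟨e, V' * D⁻¹, D, hWD, he, hpiv, hle1, ?_⟩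
  intro l j k hk
  refine lt_of_le_of_ne (hle1 _ _) fun h1 => ?_
  have h2 : φ (Function.update e j (Sum.inr l)) = wedgeNorm F V := by rw [hupd, h1, one_mul]
  have h3 := hmax _ (Finset.mem_filter.2 ⟨Finset.mem_univ _, h2⟩)
  refine absurd h3 (not_le.2 (Finset.card_lt_card ?_))
  rw [Finset.ssubset_iff_of_subset]
  · exact ⟨j, by simp, by simp [hk]⟩
  · intro j' hj'
    simp only [Finset.mem_filter, Finset.mem_univ, true_and] at hj' ⊢
    by_cases h : j' = j
    · rw [h, Function.update_self]; rfl
    · rwa [Function.update_of_ne h]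

/-- A lower bound for `‖g_t u_s V‖` by a minor of `u_s V`, rescaled by `g_t`. -/
lemma minor_le_wedgeNorm (t : ℕ) (s : Matrix (Fin m) (Fin n) (LaurentSeries F))
    (V : Matrix (Fin (m + n)) (Fin i) (LaurentSeries F)) (f : Fin i → Fin m ⊕ Fin n) :
    (Fintype.card F : ℝ) ^ ((n * t * (i - numLower f : ℕ) : ℤ) - m * t * numLower f) *
        absv F ((uBlk F s * V.submatrix finSumFinEquiv id).submatrix f id).det
      ≤ wedgeNorm F (gMat F m n t * uMat F s * V) := by
  have hq := one_lt_cardR F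
  refine le_trans (le_of_eq ?_)
    (absv_det_le_wedgeNorm F (gMat F m n t * uMat F s * V) (fun j => finSumFinEquiv (f j)))
  set V' := V.submatrix (finSumFinEquiv (m := m) (n := n)) id with hV'
  let c : Fin m ⊕ Fin n → LaurentSeries F := fun x =>
    if x.isRight then Xu F ^ ((m : ℤ) * t) else Xu F ^ (-(n * t : ℤ))
  have hV : V = V'.submatrix (finSumFinEquiv (m := m) (n := n)).symm id := by
    ext a b; simp [hV']
  have h1 : (gMat F m n t * uMat F s * V).submatrix (fun j => finSumFinEquiv (f j)) id
      = Matrix.of fun j j' => c (f j) * (uBlk F s * V').submatrix f id j j' := by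
    have h2 : gMat F m n t * uMat F s * V
        = (Matrix.fromBlocks
            ((Xu F ^ (-(n * t : ℤ))) • (1 : Matrix (Fin m) (Fin m) (LaurentSeries F))) 0 0
            ((Xu F ^ ((m : ℤ) * t)) • (1 : Matrix (Fin n) (Fin n) (LaurentSeries F)))
          * (uBlk F s * V')).submatrix (finSumFinEquiv (m := m) (n := n)).symm id := by
      conv_lhs => rw [hV]
      rw [gMat, uMat, Matrix.reindex_apply, Matrix.reindex_apply, Matrix.submatrix_mul_equiv,
        Matrix.submatrix_mul_equiv, Matrix.mul_assoc]
      rfl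
    rw [h2]
    ext j j'
    simp only [Matrix.submatrix_apply, Matrix.of_apply, Equiv.symm_apply_apply, id]
    rcases f j with k | l
    · simp [Matrix.mul_apply, c, Matrix.one_apply, uBlk]
    · simp [Matrix.mul_apply, c, Matrix.one_apply, uBlk]
  rw [h1, Matrix.det_mul_column, absv_mul]
  congr 1
  have h3 : ∏ j, c (f j) = (Xu F ^ ((m : ℤ) * t)) ^ numLower f
      * (Xu F ^ (-(n * t : ℤ))) ^ (i - numLower f) := by
    simp only [c]
    rw [Finset.prod_ite, Finset.prod_const, Finset.prod_const]
    congr 2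
    have := Finset.card_filter_add_card_filter_not (s := (Finset.univ : Finset (Fin i)))
      (fun j => (f j).isRight = true)
    rw [Finset.card_univ, Fintype.card_fin] at this
    unfold numLower
    omega
  rw [h3, ← zpow_natCast, ← zpow_natCast, ← zpow_mul, ← zpow_mul, absv_mul, absv_Xu_zpow,
    absv_Xu_zpow, ← zpow_add₀ (by positivity)]
  congr 1
  ring

variable {F} in
lemma IsNormalized.injective {W : Matrix (Fin m ⊕ Fin n) (Fin i) (LaurentSeries F)}
    {e : Fin i → Fin m ⊕ Fin n} (hW : IsNormalized F W e) : Function.Injective e := by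
  intro a b hab
  by_contra hne
  have h := hW.pivot a b
  rw [hab, hW.pivot, Matrix.one_apply_eq, Matrix.one_apply_ne hne] at h
  exact one_ne_zero h

lemma numLower_le {e : Fin i → Fin m ⊕ Fin n} (he : Function.Injective e) : numLower e ≤ n := by
  have h : (Finset.univ.filter fun j => (e j).isRight).card
      = Fintype.card {j // (e j).isRight} := (Fintype.card_subtype _).symm
  rw [numLower, h]
  refine (Fintype.card_le_of_injective (fun j => (e j.1).getRight j.2) ?_).trans_eq
    (Fintype.card_fin n)
  intro a b hab
  apply Subtype.ext
  apply he
  rw [← Sum.inr_getRight (e a.1) a.2, ← Sum.inr_getRight (e b.1) b.2]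
  exact congrArg Sum.inr hab

/-- Counting upper rows: those not chosen by `e`, against the lower rows chosen by `e`. -/
lemma card_compl_add {e : Fin i → Fin m ⊕ Fin n} (he : Function.Injective e) :
    Fintype.card {k : Fin m // ∀ j, e j ≠ Sum.inl k} + i = numLower e + m := by
  have h1 : Fintype.card {k : Fin m // ¬ ∀ j, e j ≠ Sum.inl k}
      = Fintype.card {j // ¬ (e j).isRight} := by
    symm
    refine Fintype.card_of_bijective
      (f := fun j => ⟨(e j.1).getLeft (by have := j.2; simpa using this), fun h =>
        h j.1 (Sum.inl_getLeft (e j.1) _).symm⟩) ⟨?_, ?_⟩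
    · intro a b hab
      apply Subtype.ext
      apply he
      have := congrArg Subtype.val hab
      simp only at this
      rw [← Sum.inl_getLeft (e a.1) (by have := a.2; simpa using this),
        ← Sum.inl_getLeft (e b.1) (by have := b.2; simpa using this), this]
    · rintro ⟨k, hk⟩
      push Not at hk
      obtain ⟨j, hj⟩ := hk
      exact ⟨⟨j, by simp [hj]⟩, by simp [hj]⟩
  have h2 := Fintype.card_subtype_compl (fun k : Fin m => ∀ j, e j ≠ Sum.inl k)
  have h3 := Fintype.card_subtype_compl (fun j => (e j).isRight = true)
  have h4 := Fintype.card_subtype_le (fun k : Fin m => ∀ j, e j ≠ Sum.inl k)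
  have h5 := Fintype.card_subtype_le (fun j => (e j).isRight = true)
  have h6 : numLower e = Fintype.card {j // (e j).isRight = true} := (Fintype.card_subtype _).symm
  rw [Fintype.card_fin] at h2 h3 h4 h5
  rw [h6]
  omega

/-- Exchanging `a` lower rows for upper ones decreases the number of lower rows by `a`. -/
lemma numLower_exchange {a : ℕ} {e f : Fin i → Fin m ⊕ Fin n} (h : Fin a → Fin i)
    (hh : Function.Injective h) (he : ∀ z, (e (h z)).isRight)
    (hf : ∀ j, (∀ z, j ≠ h z) → f j = e j) (hf' : ∀ z, ¬ (f (h z)).isRight) :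
    numLower f + a = numLower e := by
  have h1 : (Finset.univ.filter fun j => (f j).isRight = true)
      = (Finset.univ.filter fun j => (e j).isRight = true) \ Finset.univ.image h := by
    ext j
    simp only [Finset.mem_filter, Finset.mem_univ, true_and, Finset.mem_sdiff, Finset.mem_image,
      not_exists]
    constructor
    · intro hj
      have : ∀ z, ¬ h z = j := fun z hz => hf' z (by rw [hz]; exact hj)
      exact ⟨by rw [← hf j fun z hz => this z hz.symm]; exact hj, this⟩
    · rintro ⟨hj, hz⟩
      rw [hf j fun z hz' => hz z hz'.symm]; exact hj
  have h2 : Finset.univ.image h ⊆ Finset.univ.filter fun j => (e j).isRight = true := by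
    intro j hj
    obtain ⟨z, -, rfl⟩ := Finset.mem_image.1 hj
    exact Finset.mem_filter.2 ⟨Finset.mem_univ _, he z⟩
  have h3 := Finset.card_sdiff_add_card_eq_card h2
  rw [← h1, Finset.card_image_of_injective _ hh, Finset.card_univ, Fintype.card_fin] at h3
  exact h3

/-- `q ^ expo m n t i` is the largest factor by which `g_t` scales a coordinate of `⋀^i K^{m+n}`. -/
def expo (m n t i : ℕ) : ℕ := if i ≤ m then n * t * i else m * t * (m + n - i)

lemma minor_mul_le (t : ℕ) (s : Matrix (Fin m) (Fin n) (LaurentSeries F))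
    {V : Matrix (Fin (m + n)) (Fin i) (LaurentSeries F)}
    {W : Matrix (Fin m ⊕ Fin n) (Fin i) (LaurentSeries F)}
    {D : Matrix (Fin i) (Fin i) (LaurentSeries F)}
    (hV : V.submatrix finSumFinEquiv id = W * D) (hD : absv F D.det = wedgeNorm F V)
    (f : Fin i → Fin m ⊕ Fin n) :
    (Fintype.card F : ℝ) ^ ((n * t * (i - numLower f : ℕ) : ℤ) - m * t * numLower f) *
        absv F ((uBlk F s * W).submatrix f id).det * wedgeNorm F V
      ≤ wedgeNorm F (gMat F m n t * uMat F s * V) := by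
  have h := minor_le_wedgeNorm F t s V f
  have h1 : (uBlk F s * V.submatrix finSumFinEquiv id).submatrix f id
      = (uBlk F s * W).submatrix f id * D := by
    rw [hV, ← Matrix.mul_assoc]; rfl
  rwa [h1, Matrix.det_mul, absv_mul, hD, ← mul_assoc] at h

lemma expo_of_numLower (t : ℕ) (hin : i ≤ m + n - 1) (f : Fin i → Fin m ⊕ Fin n)
    (hf : numLower f = i - m) :
    ((n * t * (i - numLower f : ℕ) : ℤ) - m * t * numLower f) = (expo m n t i : ℤ) := by
  rw [hf, expo]
  split_ifs with h
  · rw [Nat.sub_eq_zero_of_le h]; push_cast; simp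
  · have h1 : i - (i - m) = m := by omega
    rw [h1]
    push_cast [Nat.cast_sub (show m ≤ i by omega), Nat.cast_sub (show i ≤ m + n by omega)]
    ring

lemma expo_le (t : ℕ) : expo m n t i ≤ m * n * t := by
  rw [expo]
  split_ifs with h
  · calc n * t * i ≤ n * t * m := Nat.mul_le_mul_left _ h
      _ = m * n * t := by ring
  · calc m * t * (m + n - i) ≤ m * t * n := Nat.mul_le_mul_left _ (by omega)
      _ = m * n * t := by ring

/-- Either `‖g_t u_s V‖` is uniformly as large as possible, or it is controlled by the maximal minors
of a matrix `S` of size `(α + r) × (r + 1)` depending on `s`, which is translated by `Z` when `s` is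
translated by `τ Z`. -/
theorem exists_reduction (t : ℕ) (hin : i ≤ m + n - 1)
    (V : Matrix (Fin (m + n)) (Fin i) (LaurentSeries F)) (hV : wedgeNorm F V ≠ 0) :
    (∀ s ∈ intMat F m n, (Fintype.card F : ℝ) ^ expo m n t i * wedgeNorm F V
        ≤ wedgeNorm F (gMat F m n t * uMat F s * V)) ∨
    ∃ r < m, ∃ τ : Matrix (Fin ((m - i) + (i - m) + 1 + r)) (Fin (r + 1)) (LaurentSeries F) →
        Matrix (Fin m) (Fin n) (LaurentSeries F),
      (∀ Z, (∀ x y, absv F (Z x y) ≤ 1) → τ Z ∈ intMat F m n) ∧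
      ∀ s ∈ intMat F m n, ∃ S : Matrix (Fin ((m - i) + (i - m) + 1 + r)) (Fin (r + 1))
          (LaurentSeries F), ∀ Z, (∀ x y, absv F (Z x y) ≤ 1) →
        ((Fintype.card F : ℝ) ^ (m * n * t))⁻¹ * wedgeNorm F V
            ≤ wedgeNorm F (gMat F m n t * uMat F (τ Z + s) * V) ∧
        ∀ f : Fin (r + 1) → Fin ((m - i) + (i - m) + 1 + r),
          (Fintype.card F : ℝ) ^ expo m n t i * absv F ((S + Z).submatrix f id).det * wedgeNorm F V
            ≤ wedgeNorm F (gMat F m n t * uMat F (τ Z + s) * V) := by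
  obtain ⟨e, W, D, hVW, hD, hW⟩ := exists_normalized V hV
  have hq := one_lt_cardR F
  have hV0 := wedgeNorm_nonneg F V
  have he := hW.injective
  have hlow : ∀ s ∈ intMat F m n, ((Fintype.card F : ℝ) ^ (m * n * t))⁻¹ * wedgeNorm F V
            ≤ wedgeNorm F (gMat F m n t * uMat F s * V) := by
    intro s hs
    refine le_trans ?_ (minor_mul_le F t s hVW hD e)
    rw [hW.absv_det hs, mul_one]
    refine mul_le_mul_of_nonneg_right ?_ hV0
    rw [← zpow_natCast, ← zpow_neg]
    refine zpow_le_zpow_right₀ hq.le ?_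
    have h1 := numLower_le he
    have h2 : m * t * numLower e ≤ m * t * n := Nat.mul_le_mul_left _ h1
    have h3 : (m * t * numLower e : ℤ) ≤ m * t * n := by exact_mod_cast h2
    have h4 : (0 : ℤ) ≤ n * t * (i - numLower e : ℕ) := by positivity
    push_cast
    nlinarith
  have htriv : numLower e = i - m → ∀ s ∈ intMat F m n,
      (Fintype.card F : ℝ) ^ expo m n t i * wedgeNorm F V
        ≤ wedgeNorm F (gMat F m n t * uMat F s * V) := by
    intro h s hs
    have := minor_mul_le F t s hVW hD e
    rwa [expo_of_numLower t hin e h, hW.absv_det hs, mul_one, zpow_natCast] at this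
  have hcard := card_compl_add he
  have hJB : numLower e = Fintype.card {j // (e j).isRight = true} :=
    (Fintype.card_subtype _).symm
  have hJi := Fintype.card_subtype_le (fun j => (e j).isRight = true)
  have hPm := Fintype.card_subtype_le (fun k : Fin m => ∀ j, e j ≠ Sum.inl k)
  rw [Fintype.card_fin] at hJi hPm
  by_cases hcase : i ≤ m
  · by_cases h0 : numLower e = 0
    · exact Or.inl (htriv (by omega))
    obtain ⟨r, hr⟩ : ∃ r, numLower e = r + 1 := ⟨numLower e - 1, by omega⟩
    let eA : Fin ((m - i) + (i - m) + 1 + r) ≃ {k : Fin m // ∀ j, e j ≠ Sum.inl k} :=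
      (finCongr (by omega)).trans (Fintype.equivFin _).symm
    let eB : Fin (r + 1) ≃ {j // (e j).isRight = true} :=
      (finCongr (by omega)).trans (Fintype.equivFin _).symm
    refine Or.inr ⟨r, by omega, place F (fun x => (eA x).1)
      (fun y => (e (eB y).1).getRight (eB y).2), fun Z hZ => place_mem F _ _ hZ, fun s hs => ?_⟩
    obtain ⟨S, hS⟩ := exists_schur (ρA := fun x => (eA x).1)
      (ρB := fun y => (e (eB y).1).getRight (eB y).2) (g := fun y => (eB y).1) hW
      (Subtype.val_injective.comp eA.injective) (fun x j => (eA x).2 j)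
      (fun y => (Sum.inr_getRight _ _).symm) (Subtype.val_injective.comp eB.injective) hs
    refine ⟨S, fun Z hZ => ⟨hlow _ (intMat_add F hs (place_mem F _ _ hZ)), fun f' => ?_⟩⟩
    obtain ⟨f, hf1, hf2, hf3⟩ := hS Z f' id Function.injective_id
    have hnum := numLower_exchange (e := e) (f := f) (fun z => (eB z).1)
      (Subtype.val_injective.comp eB.injective) (fun z => (eB z).2) hf1
      (fun z => by have := hf2 z; simp only [id] at this; rw [this]; simp)
    have := minor_mul_le F t (place F (fun x => (eA x).1)
      (fun y => (e (eB y).1).getRight (eB y).2) Z + s) hVW hD f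
    rwa [expo_of_numLower t hin f (by omega), hf3, zpow_natCast] at this
  · by_cases h0 : Fintype.card {k : Fin m // ∀ j, e j ≠ Sum.inl k} = 0
    · exact Or.inl (htriv (by omega))
    obtain ⟨r, hr⟩ : ∃ r, Fintype.card {k : Fin m // ∀ j, e j ≠ Sum.inl k} = r + 1 :=
      ⟨Fintype.card {k : Fin m // ∀ j, e j ≠ Sum.inl k} - 1, by omega⟩
    let eA : Fin (r + 1) ≃ {k : Fin m // ∀ j, e j ≠ Sum.inl k} :=
      (finCongr (by omega)).trans (Fintype.equivFin _).symm
    let eB : Fin ((m - i) + (i - m) + 1 + r) ≃ {j // (e j).isRight = true} :=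
      (finCongr (by omega)).trans (Fintype.equivFin _).symm
    -- the roles of rows and columns are exchanged
    refine Or.inr ⟨r, by omega, fun Z => place F (fun x => (eA x).1)
      (fun y => (e (eB y).1).getRight (eB y).2) Z.transpose,
      fun Z hZ => place_mem F _ _ fun x y => hZ y x, fun s hs => ?_⟩
    obtain ⟨S, hS⟩ := exists_schur (ρA := fun x => (eA x).1)
      (ρB := fun y => (e (eB y).1).getRight (eB y).2) (g := fun y => (eB y).1) hW
      (Subtype.val_injective.comp eA.injective) (fun x j => (eA x).2 j)
      (fun y => (Sum.inr_getRight _ _).symm) (Subtype.val_injective.comp eB.injective) hs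
    refine ⟨S.transpose, fun Z hZ =>
      ⟨hlow _ (intMat_add F hs (place_mem F _ _ fun x y => hZ y x)), fun f' => ?_⟩⟩
    by_cases hinj : Function.Injective f'
    · obtain ⟨f, hf1, hf2, hf3⟩ := hS Z.transpose id f' hinj
      have hnum := numLower_exchange (e := e) (f := f) (fun z => (eB (f' z)).1)
        ((Subtype.val_injective.comp eB.injective).comp hinj) (fun z => (eB (f' z)).2) hf1
        (fun z => by rw [hf2 z]; simp)
      have := minor_mul_le F t (place F (fun x => (eA x).1)
        (fun y => (e (eB y).1).getRight (eB y).2) Z.transpose + s) hVW hD f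
      rw [expo_of_numLower t hin f (by omega), hf3, zpow_natCast] at this
      rw [← Matrix.det_transpose ((S.transpose + Z).submatrix f' id)]
      exact this
    · simp only [Function.Injective, not_forall] at hinj
      obtain ⟨a, b, hab, hne⟩ := hinj
      rw [Matrix.det_zero_of_row_eq hne (by ext j; simp [hab]), absv_zero, mul_zero, zero_mul]
      exact wedgeNorm_nonneg F _

end Reduction

/-! ### Averaging over translates -/

section Averaging

variable (F : Type*) [Field F] [Fintype F] {m n : ℕ}

lemma intMat_neg {a : Matrix (Fin m) (Fin n) (LaurentSeries F)} (ha : a ∈ intMat F m n) :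
    -a ∈ intMat F m n := fun k l => by
  have : absv F (-a k l) = absv F (a k l) := map_neg_eq_map (av F) _
  rw [Matrix.neg_apply, this]; exact ha k l

lemma sum_lintegral_le {α ι : Type*} [MeasurableSpace α] (μ : Measure α) (T : Finset ι)
    (f : ι → α → ℝ≥0∞) : ∑ a ∈ T, ∫⁻ s, f a s ∂μ ≤ ∫⁻ s, ∑ a ∈ T, f a s ∂μ := by
  induction T using Finset.induction_on with
  | empty => simp
  | insert a T ha ih =>
    rw [Finset.sum_insert ha]
    simp_rw [Finset.sum_insert ha]
    exact (add_le_add_right ih _).trans (le_lintegral_add _ _)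

variable (μ : Measure (Matrix (Fin m) (Fin n) (LaurentSeries F)))

/-- No measurability of `Φ` is needed, since the lower integral is superadditive. -/
lemma lintegral_le_of_average (hinv : ∀ a, μ.map (fun s => a + s) = μ)
    (hnorm : μ (intMat F m n) = 1) {Q : Type*} [Fintype Q] [Nonempty Q]
    (τ : Q → Matrix (Fin m) (Fin n) (LaurentSeries F)) (hτ : ∀ a, τ a ∈ intMat F m n)
    (Φ : Matrix (Fin m) (Fin n) (LaurentSeries F) → ℝ≥0∞) (C : ℝ≥0∞)
    (h : ∀ s ∈ intMat F m n, ∑ a, Φ (τ a + s) ≤ Fintype.card Q * C) :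
    ∫⁻ s in intMat F m n, Φ s ∂μ ≤ C := by
  have hB : BorelSpace (Matrix (Fin m) (Fin n) (LaurentSeries F)) := ⟨rfl⟩
  have hI := measurableSet_intMat F m n
  have h1 : ∀ a ∈ intMat F m n, ∫⁻ s in intMat F m n, Φ s ∂μ
      ≤ ∫⁻ s in intMat F m n, Φ (a + s) ∂μ := by
    intro a ha
    rw [← lintegral_indicator hI, ← lintegral_indicator hI]
    conv_lhs => rw [← hinv a]
    have h2 := lintegral_map_equiv (μ := μ) ((intMat F m n).indicator Φ)
      (Homeomorph.addLeft a).toMeasurableEquiv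
    refine (le_of_eq h2).trans (lintegral_mono fun s => ?_)
    change (intMat F m n).indicator Φ (a + s) ≤ _
    by_cases hs : a + s ∈ intMat F m n
    · have hs' : s ∈ intMat F m n := by
        have := intMat_add F hs (intMat_neg F ha)
        rwa [neg_add_cancel_left] at this
      rw [Set.indicator_of_mem hs, Set.indicator_of_mem hs']
    · rw [Set.indicator_of_notMem hs]; exact zero_le
  have h2 : (Fintype.card Q : ℝ≥0∞) * ∫⁻ s in intMat F m n, Φ s ∂μ ≤ Fintype.card Q * C := by
    calc (Fintype.card Q : ℝ≥0∞) * ∫⁻ s in intMat F m n, Φ s ∂μ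
        = ∑ _a : Q, ∫⁻ s in intMat F m n, Φ s ∂μ := by simp
      _ ≤ ∑ a : Q, ∫⁻ s in intMat F m n, Φ (τ a + s) ∂μ := Finset.sum_le_sum fun a _ => h1 _ (hτ a)
      _ ≤ ∫⁻ s in intMat F m n, ∑ a : Q, Φ (τ a + s) ∂μ := sum_lintegral_le _ _ _
      _ ≤ ∫⁻ _s in intMat F m n, Fintype.card Q * C ∂μ := setLIntegral_mono' hI h
      _ = Fintype.card Q * C := by
        rw [setLIntegral_const, hnorm, mul_one]
  exact (ENNReal.mul_le_mul_iff_right (by simp) (by simp)).1 h2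

end Averaging

/-! ### The contraction estimate -/

section Contraction

lemma betaE_pos {m n i : ℕ} (hm : 1 ≤ m) (hn : 1 ≤ n) (hi : 1 ≤ i) (hin : i ≤ m + n - 1) :
    0 < betaE m n i := by
  rw [betaE]
  split_ifs with h
  · positivity
  · have : 0 < m + n - i := by omega
    positivity

lemma betaE_le {m n i : ℕ} (hi : 1 ≤ i) (hin : i ≤ m + n - 1) :
    betaE m n i ≤ ((m - i) + (i - m) + 1 : ℕ) := by
  -- `a / b ≤ a - b + 1` for `1 ≤ b ≤ a`, since `(a - b) * (b - 1) ≥ 0`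
  have key : ∀ a b c : ℕ, 1 ≤ b → a + 1 = b + c → 1 ≤ c → (a : ℝ) / b ≤ (c : ℕ) := by
    intro a b c hb h hc
    have hb' : (1 : ℝ) ≤ b := by exact_mod_cast hb
    have hc' : (1 : ℝ) ≤ c := by exact_mod_cast hc
    have h' : (a : ℝ) + 1 = b + c := by exact_mod_cast h
    rw [div_le_iff₀ (by linarith)]
    nlinarith
  rw [betaE]
  split_ifs with h
  · exact key _ _ _ hi (by omega) (by omega)
  · exact key _ _ _ (by omega) (by omega) (by omega)

lemma expo_mul_betaE {m n i : ℕ} (t : ℕ) (hi : 1 ≤ i) (hin : i ≤ m + n - 1) :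
    (expo m n t i : ℝ) * betaE m n i = (m * n * t : ℕ) := by
  rw [expo, betaE]
  split_ifs with h
  · have : (i : ℝ) ≠ 0 := by positivity
    push_cast
    field_simp
  · have h1 : 0 < m + n - i := by omega
    have : ((m + n - i : ℕ) : ℝ) ≠ 0 := by positivity
    rw [Nat.cast_mul, Nat.cast_mul]
    push_cast only [Nat.cast_mul]
    field_simp

/-- The contribution of the `k`-th layer. -/
lemma rpow_neg_le {q w x β : ℝ} {E k M : ℕ} (hq : 1 < q) (hw : 0 < w) (hβ : 0 ≤ β)
    (hE : E * β = M) (hx : q ^ E * q⁻¹ ^ k * w ≤ x) :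
    x ^ (-β) ≤ q⁻¹ ^ M * (q ^ k) ^ β * w ^ (-β) := by
  have hq0 : 0 < q := by linarith
  refine (Real.rpow_le_rpow_of_nonpos (by positivity) hx (by linarith)).trans (le_of_eq ?_)
  rw [Real.mul_rpow (by positivity) hw.le, Real.mul_rpow (by positivity) (by positivity)]
  congr 2
  · rw [Real.rpow_neg (by positivity), ← Real.rpow_natCast q E, ← Real.rpow_mul hq0.le, hE,
      Real.rpow_natCast, inv_pow]
  · rw [inv_pow, Real.inv_rpow (by positivity), Real.rpow_neg (by positivity), inv_inv]

lemma rpow_mul_pow_le_one {q β : ℝ} {k α : ℕ} (hq : 1 < q) (hβ : β ≤ α) :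
    q⁻¹ ^ (k * α) * (q ^ k) ^ β ≤ 1 := by
  have h1 : (1 : ℝ) ≤ q ^ k := one_le_pow₀ hq.le
  have h2 : (q ^ k) ^ β ≤ (q ^ k) ^ α := by
    rw [← Real.rpow_natCast (q ^ k) α]
    exact Real.rpow_le_rpow_of_exponent_le h1 hβ
  have hq0 : 0 < q := by linarith
  calc _ ≤ q⁻¹ ^ (k * α) * (q ^ k) ^ α := by gcongr
    _ = 1 := by rw [inv_pow, pow_mul]; exact inv_mul_cancel₀ (by positivity)

/-- A layer-cake estimate, averaged over a finite family: if `x a` is bounded below by `w` times the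
largest minor, up to the factor `q ^ E`, then the negative moments of `x` are controlled by the
frequencies with which all the minors are small. -/
lemma average_le (F : Type*) [Field F] [Fintype F] {α r E M : ℕ} {w β : ℝ} (hw : 0 < w)
    (hβ : 0 ≤ β) (hβα : β ≤ α) (hE : E * β = M)
    (S : Matrix (Fin (α + r)) (Fin (r + 1)) (LaurentSeries F))
    (x : (Fin (r + 1) → Fin (α + r) → Fin (E + M) → F) → ℝ)
    (hx1 : ∀ a, ((Fintype.card F : ℝ) ^ M)⁻¹ * w ≤ x a)
    (hx2 : ∀ a (f : Fin (r + 1) → Fin (α + r)), (Fintype.card F : ℝ) ^ E *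
      absv F (Matrix.of fun y z => S (f y) z + trunc F (E + M) (a z (f y))).det * w ≤ x a) :
    ∑ a, x a ^ (-β) ≤ Fintype.card (Fin (r + 1) → Fin (α + r) → Fin (E + M) → F) *
      (2 ^ r * ((E + M : ℕ) + 1) * (Fintype.card F : ℝ)⁻¹ ^ M * w ^ (-β)) := by
  have hq := one_lt_cardR F
  set q : ℝ := ((Fintype.card F : ℕ) : ℝ) with hqdef
  have hq0 : 0 < q := by linarith
  have hq2 : (2 : ℝ) ≤ q := by
    have : 1 < Fintype.card F := Fintype.one_lt_card
    rw [hqdef]; exact_mod_cast this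
  let P : (Fin (r + 1) → Fin (α + r) → Fin (E + M) → F) → ℕ → Prop := fun a k =>
    k = 0 ∨ SmallMinors (av F) (trunc F (E + M)) S a (q⁻¹ ^ k)
  have hterm : ∀ a, x a ^ (-β) ≤ ∑ k ∈ Finset.range (E + M + 1),
      (if P a k then (1 : ℝ) else 0) * (q⁻¹ ^ M * (q ^ k) ^ β * w ^ (-β)) := by
    intro a
    set k := Nat.findGreatest (P a) (E + M) with hk
    have hkle : k ≤ E + M := Nat.findGreatest_le _
    have hPk : P a k := Nat.findGreatest_spec (Nat.zero_le _) (Or.inl rfl)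
    have hxk : q ^ E * q⁻¹ ^ k * w ≤ x a := by
      rcases hkle.lt_or_eq with hlt | heq
      · have hnot : ¬ P a (k + 1) := Nat.findGreatest_is_greatest (Nat.lt_succ_self _) hlt
        simp only [P, SmallMinors, not_or, not_forall, not_le] at hnot
        obtain ⟨-, f, hf⟩ := hnot
        refine le_trans ?_ (hx2 a f)
        have := absv_discrete F _ k hf
        gcongr
      · refine le_trans (le_of_eq ?_) (hx1 a)
        rw [heq, inv_pow, pow_add]
        field_simp
    refine (rpow_neg_le hq hw hβ hE hxk).trans ?_
    have hmem : k ∈ Finset.range (E + M + 1) := Finset.mem_range.2 (by omega)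
    refine le_trans (le_of_eq ?_) (Finset.single_le_sum (f := fun k =>
      (if P a k then (1 : ℝ) else 0) * (q⁻¹ ^ M * (q ^ k) ^ β * w ^ (-β)))
      (fun k _ => ?_) hmem)
    · simp only [if_pos hPk, one_mul]
    · split_ifs <;> positivity
  have hcount : ∀ k ≤ E + M, ∑ a, (if P a k then (1 : ℝ) else 0)
      ≤ Fintype.card (Fin (r + 1) → Fin (α + r) → Fin (E + M) → F) *
        (2 ^ r * q⁻¹ ^ (k * α)) := by
    intro k hk
    have hcard : (Fintype.card (Fin (r + 1) → Fin (α + r) → Fin (E + M) → F) : ℝ)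
        = (Fintype.card (Fin (E + M) → F) : ℝ) ^ ((α + r) * (r + 1)) := by
      rw [Fintype.card_fun, Fintype.card_fun (α := Fin (α + r)), ← pow_mul]
      simp
    rcases Nat.eq_zero_or_pos k with rfl | hk0
    · simp only [P, true_or, if_true, zero_mul, pow_zero, mul_one]
      rw [Finset.sum_const, nsmul_eq_mul, mul_one, Finset.card_univ]
      exact le_mul_of_one_le_right (by positivity) (one_le_pow₀ one_le_two)
    · have := count_main (av F) q⁻¹ (trunc F (E + M)) (by positivity)
        (by rw [one_div]; exact inv_anti₀ two_pos hq2) (E + M) (absv_discrete F)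
        (fun k hk z => count_trunc F (E + M) k hk z) α r k hk S
      rw [hcard]
      refine le_of_eq_of_le ?_ (this.trans_eq (by ring))
      refine Finset.sum_congr rfl fun a _ => ?_
      simp only [P, hk0.ne', false_or]
  set Q : ℝ := ((Fintype.card (Fin (r + 1) → Fin (α + r) → Fin (E + M) → F) : ℕ) : ℝ) with hQ
  calc ∑ a, x a ^ (-β)
      ≤ ∑ a, ∑ k ∈ Finset.range (E + M + 1),
          (if P a k then (1 : ℝ) else 0) * (q⁻¹ ^ M * (q ^ k) ^ β * w ^ (-β)) :=
        Finset.sum_le_sum fun a _ => hterm a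
    _ = ∑ k ∈ Finset.range (E + M + 1), (∑ a, (if P a k then (1 : ℝ) else 0)) *
          (q⁻¹ ^ M * (q ^ k) ^ β * w ^ (-β)) := by
        rw [Finset.sum_comm]
        exact Finset.sum_congr rfl fun k _ => (Finset.sum_mul _ _ _).symm
    _ ≤ ∑ k ∈ Finset.range (E + M + 1), Q * (2 ^ r * q⁻¹ ^ M * w ^ (-β)) := by
        refine Finset.sum_le_sum fun k hk => ?_
        have hk' : k ≤ E + M := by rw [Finset.mem_range] at hk; omega
        calc _ ≤ Q * (2 ^ r * q⁻¹ ^ (k * α)) * (q⁻¹ ^ M * (q ^ k) ^ β * w ^ (-β)) := by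
              gcongr
              exact hcount k hk'
          _ = Q * (2 ^ r * q⁻¹ ^ M * w ^ (-β)) * (q⁻¹ ^ (k * α) * (q ^ k) ^ β) := by ring
          _ ≤ _ := mul_le_of_le_one_right (by positivity) (rpow_mul_pow_le_one hq hβα)
    _ = _ := by
        rw [Finset.sum_const, Finset.card_range, nsmul_eq_mul]
        push_cast
        ring

end Contraction

/-- **Proposition 3.2 (linear algebra contraction estimate).**
There is `c > 0` depending only on `m, n` such that for every `t ≥ 1`, every
`i ∈ {1, …, m+n-1}` and every decomposable `i`-vector `v = v₁ ∧ ⋯ ∧ v_i ∈ ⋀^i K^{m+n}`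
(given by the columns of a `(m+n) × i` matrix `v`),
`∫_{M_{m,n}(𝒪)} ‖g_t u_s v‖^{-β_i} dμ_{mn}(s) ≤ c t q^{-mnt} ‖v‖^{-β_i}`,
where `μ_{mn}` is the additive Haar measure with `μ_{mn}(M_{m,n}(𝒪)) = 1`. -/
theorem stmt2 (F : Type*) [Field F] [Fintype F] (m n : ℕ) (hm : 1 ≤ m) (hn : 1 ≤ n)
    (μ : MeasureTheory.Measure (Matrix (Fin m) (Fin n) (LaurentSeries F)))
    (hinv : ∀ a, μ.map (fun s => a + s) = μ)
    (hnorm : μ (intMat F m n) = 1) :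
    ∃ c : ℝ, 0 < c ∧ ∀ t : ℤ, 1 ≤ t → ∀ i : ℕ, 1 ≤ i → i ≤ m + n - 1 →
      ∀ v : Matrix (Fin (m + n)) (Fin i) (LaurentSeries F),
        (∫⁻ s in intMat F m n,
            (ENNReal.ofReal (wedgeNorm F (gMat F m n t * uMat F s * v))) ^ (-(betaE m n i)) ∂μ)
          ≤ ENNReal.ofReal (c * (t : ℝ) * (Fintype.card F : ℝ) ^ (-(m * n * t : ℤ)))
              * (ENNReal.ofReal (wedgeNorm F v)) ^ (-(betaE m n i)) := by
  have hq := one_lt_cardR F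
  set q : ℝ := ((Fintype.card F : ℕ) : ℝ) with hqdef
  have hq0 : 0 < q := by linarith
  refine ⟨3 * m * n * 2 ^ m, by positivity, ?_⟩
  intro t ht i hi hin v
  lift t to ℕ using (by omega)
  have ht1 : 1 ≤ t := by exact_mod_cast ht
  have hβ := betaE_pos hm hn hi hin
  have hE := expo_mul_betaE t hi hin
  set β := betaE m n i with hβdef
  set E := expo m n t i with hEdef
  set M := m * n * t with hM
  have hqM : q ^ (-(m * n * (t : ℤ))) = q⁻¹ ^ M := by
    rw [zpow_neg, inv_pow, ← zpow_natCast, hM]; push_cast; rfl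
  rw [hqM]
  by_cases hw0 : wedgeNorm F v = 0
  · have hc : 0 < 3 * (m : ℝ) * n * 2 ^ m * ((t : ℤ) : ℝ) * q⁻¹ ^ M := by
      have : (0 : ℝ) < ((t : ℤ) : ℝ) := by exact_mod_cast ht1
      positivity
    rw [hw0, ENNReal.ofReal_zero, ENNReal.zero_rpow_of_neg (by linarith),
      ENNReal.mul_top (by simpa using hc)]
    exact le_top
  have hw : 0 < wedgeNorm F v := lt_of_le_of_ne (wedgeNorm_nonneg F v) (Ne.symm hw0)
  set w := wedgeNorm F v with hwdef
  have hwβ : 0 < w ^ (-β) := Real.rpow_pos_of_pos hw _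
  rw [ENNReal.ofReal_rpow_of_pos hw, ← ENNReal.ofReal_mul' hwβ.le]
  have hEM : E ≤ M := expo_le t
  have hM1 : 1 ≤ M := Nat.mul_pos (Nat.mul_pos hm hn) ht1
  -- `E + M + 1` layers contribute equally, and there are at most `3 * M` of them
  have hfinal : ∀ r ≤ m, 2 ^ r * ((E + M : ℕ) + 1) * q⁻¹ ^ M * w ^ (-β)
      ≤ 3 * (m : ℝ) * n * 2 ^ m * ((t : ℤ) : ℝ) * q⁻¹ ^ M * w ^ (-β) := by
    intro r hr
    have h1 : (((E + M : ℕ) : ℝ) + 1) ≤ 3 * (M : ℕ) := by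
      have : E + M + 1 ≤ 3 * M := by omega
      exact_mod_cast this
    calc _ ≤ (2 : ℝ) ^ m * (3 * (M : ℕ)) * q⁻¹ ^ M * w ^ (-β) := by
          gcongr
          exact one_le_two
      _ = _ := by rw [hM]; push_cast; ring
  rcases exists_reduction F t hin v hw0 with hbig | ⟨r, hr, τ, hτ, hred⟩
  · calc _ ≤ ∫⁻ _s in intMat F m n, ENNReal.ofReal (q⁻¹ ^ M * w ^ (-β)) ∂μ := by
          refine setLIntegral_mono' (measurableSet_intMat F m n) fun s hs => ?_
          have hx : q ^ E * q⁻¹ ^ 0 * w ≤ wedgeNorm F (gMat F m n t * uMat F s * v) := by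
            rw [pow_zero, mul_one]; exact hbig s hs
          rw [ENNReal.ofReal_rpow_of_pos (lt_of_lt_of_le (by positivity) hx)]
          refine ENNReal.ofReal_le_ofReal ((rpow_neg_le hq hw hβ.le hE hx).trans_eq ?_)
          simp
      _ = ENNReal.ofReal (q⁻¹ ^ M * w ^ (-β)) := by rw [setLIntegral_const, hnorm, mul_one]
      _ ≤ _ := by
          refine ENNReal.ofReal_le_ofReal (le_trans ?_ (hfinal 0 (Nat.zero_le _)))
          rw [pow_zero, one_mul]
          gcongr
          exact le_mul_of_one_le_left (by positivity) (by linarith [Nat.cast_nonneg (α := ℝ) (E + M)])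
  · let Z : (Fin (r + 1) → Fin ((m - i) + (i - m) + 1 + r) → Fin (E + M) → F) →
        Matrix (Fin ((m - i) + (i - m) + 1 + r)) (Fin (r + 1)) (LaurentSeries F) :=
      fun a => Matrix.of fun y z => trunc F (E + M) (a z y)
    have hZ : ∀ a y z, absv F (Z a y z) ≤ 1 := fun a y z => absv_trunc F _ _
    refine (lintegral_le_of_average F μ hinv hnorm (fun a => τ (Z a)) (fun a => hτ _ (hZ a)) _
      (ENNReal.ofReal (2 ^ r * ((E + M : ℕ) + 1) * q⁻¹ ^ M * w ^ (-β))) ?_).trans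
      (ENNReal.ofReal_le_ofReal (hfinal r hr.le))
    intro s hs
    obtain ⟨S, hS⟩ := hred s hs
    have havg := average_le F hw hβ.le (betaE_le hi hin) hE S
      (fun a => wedgeNorm F (gMat F m n t * uMat F (τ (Z a) + s) * v))
      (fun a => (hS (Z a) (hZ a)).1) (fun a f => (hS (Z a) (hZ a)).2 f)
    calc _ = ∑ a, ENNReal.ofReal
            (wedgeNorm F (gMat F m n t * uMat F (τ (Z a) + s) * v) ^ (-β)) := by
          refine Finset.sum_congr rfl fun a _ => ENNReal.ofReal_rpow_of_pos ?_
          exact lt_of_lt_of_le (by positivity) (hS (Z a) (hZ a)).1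
      _ = ENNReal.ofReal (∑ a, wedgeNorm F (gMat F m n t * uMat F (τ (Z a) + s) * v) ^ (-β)) :=
          (ENNReal.ofReal_sum_of_nonneg fun a _ =>
            Real.rpow_nonneg (wedgeNorm_nonneg F _) _).symm
      _ ≤ _ := ENNReal.ofReal_le_ofReal havg
      _ = _ := by
          rw [ENNReal.ofReal_mul (by positivity), ENNReal.ofReal_natCast]
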